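/- arXiv:1410.4118 — 2 statements merged into one kernel-verified Lean document; each statement's English description precedes it below -/
import Mathlib

section
/- Every graph G with no odd hole satisfies χ(G) ≤ 2^(2^(ω(G)+2)) / (48·(ω(G)+2)). -/
open SimpleGraph

universe u

variable {V : Type u}

/-- The independence (stability) number of a graph. -/
noncomputable def indepNum (G : SimpleGraph V) : ℕ :=
  sSup {n | ∃ s : Finset V, s.card = n ∧ ∀ x ∈ s, ∀ y ∈ s, x ≠ y → ¬ G.Adj x y}

/-- A walk is induced: any edge of `G` between vertices of the walk is an edge of the walk. -/
def IsInducedWalk (G : SimpleGraph V) {u v : V} (p : G.Walk u v) : Prop :=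
  ∀ x ∈ p.support, ∀ y ∈ p.support, G.Adj x y → p.toSubgraph.Adj x y

/-- An induced path. -/
def IsInducedPath (G : SimpleGraph V) {u v : V} (p : G.Walk u v) : Prop :=
  p.IsPath ∧ IsInducedWalk G p

/-- An odd hole: an induced cycle of odd length at least 5. -/
def HasOddHole (G : SimpleGraph V) : Prop :=
  ∃ (v : V) (p : G.Walk v v), p.IsCycle ∧ IsInducedWalk G p ∧ Odd p.length ∧ 5 ≤ p.length

/-- A cograph: no induced path on four vertices. -/
def IsCograph (G : SimpleGraph V) : Prop :=
  ¬ ∃ a b c d : V, a ≠ c ∧ a ≠ d ∧ b ≠ d ∧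
    G.Adj a b ∧ G.Adj b c ∧ G.Adj c d ∧ ¬ G.Adj a c ∧ ¬ G.Adj a d ∧ ¬ G.Adj b d

/-- A levelling `(L 0, …, L k)` in `G`. -/
def IsLevelling (G : SimpleGraph V) (k : ℕ) (L : ℕ → Set V) : Prop :=
  (∀ i j, i ≤ k → j ≤ k → i ≠ j → Disjoint (L i) (L j)) ∧
  (∃ x, L 0 = {x}) ∧
  (∀ i, 1 ≤ i → i ≤ k → ∀ v ∈ L i,
     (∃ u ∈ L (i - 1), G.Adj u v) ∧ (∀ h, h + 1 < i → ∀ u ∈ L h, ¬ G.Adj u v))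

/-- The interior (internal vertices) of a walk is contained in `S`. -/
def InteriorIn (G : SimpleGraph V) {u v : V} (p : G.Walk u v) (S : Set V) : Prop :=
  ∀ x ∈ p.support, x ≠ u → x ≠ v → x ∈ S

/-- The union `L 0 ∪ ⋯ ∪ L (k-1)`. -/
def lowerLevels (L : ℕ → Set V) (k : ℕ) : Set V := ⋃ i ∈ Finset.range k, L i

/-- There is an odd induced path between `u` and `v` with interior in the lower levels. -/
def OddConn (G : SimpleGraph V) (L : ℕ → Set V) (k : ℕ) (u v : V) : Prop :=
  u ≠ v ∧ ∃ p : G.Walk u v, IsInducedPath G p ∧ Odd p.length ∧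
    InteriorIn G p (lowerLevels L k)

/-- `w ∈ L (i+1)` is a dependent of `u ∈ L i`: `u` is its only parent. -/
def IsDependent (G : SimpleGraph V) (L : ℕ → Set V) (i : ℕ) (u w : V) : Prop :=
  w ∈ L (i + 1) ∧ G.Adj u w ∧ ∀ x ∈ L i, G.Adj x w → x = u

/-
Induction on the clique number. Sorting the vertices by the parity of their distance to a root costs
a factor 2 and reduces the problem to a connected set `C` of vertices of equal depth. Choosing each
level below `C` to be a minimal cover of the next one, every vertex has a dependent; following
dependents into `C` joins any two nonadjacent vertices of a level by an induced path which sees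
nothing of the levels below, so all induced paths joining them through those levels have the same
parity, as there is no odd hole.

Joining vertices of a level by an edge when this parity is odd gives a graph which, after splitting
each level into four classes along a path of successive dependents, is a cograph on every class. A
stable set `X` all of whose odd graphs are cographs constrains its neighbourhood `Y`: the vertices
of `Y` without common neighbour in `X` form a graph in which every vertex of a depth level is
adjacent to both or to neither of two adjacent vertices of the next level. Hence `Y` needs
few more colours than the neighbourhood of a single vertex. Two such steps lead from the classes to
`C`, so the bound is essentially squared when the clique number grows by one.
-/

section InducedPath

variable {G : SimpleGraph V} {S T : Set V} {l m : ℕ} {u v x : V}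

theorem IsInducedPath.reverse {p : G.Walk u v} (hp : IsInducedPath G p) :
    IsInducedPath G p.reverse := by
  refine ⟨hp.1.reverse, ?_⟩
  simpa [IsInducedWalk, Walk.toSubgraph_reverse] using hp.2

theorem IsInducedPath.cons {p : G.Walk x v} (hp : IsInducedPath G p) (hux : G.Adj u x)
    (hup : u ∉ p.support) (hadj : ∀ y ∈ p.support, G.Adj u y → y = x) :
    IsInducedPath G (Walk.cons hux p) := by
  refine ⟨hp.1.cons hup, fun a ha b hb hab => ?_⟩
  simp only [Walk.support_cons, List.mem_cons] at ha hb
  simp only [Walk.toSubgraph, Subgraph.sup_adj, subgraphOfAdj_adj]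
  rcases ha with rfl | ha <;> rcases hb with rfl | hb
  · exact absurd hab G.irrefl
  · simp [hadj b hb hab]
  · simp [hadj a ha hab.symm]
  · exact Or.inr (hp.2 a ha b hb hab)

theorem IsInducedPath.of_cons {p : G.Walk x v} {hux : G.Adj u x}
    (hp : IsInducedPath G (Walk.cons hux p)) : IsInducedPath G p := by
  have hup : u ∉ p.support := ((Walk.cons_isPath_iff hux p).1 hp.1).2
  refine ⟨hp.1.of_cons, fun a ha b hb hab => ?_⟩
  have h := hp.2 a (List.mem_cons_of_mem _ ha) b (List.mem_cons_of_mem _ hb) hab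
  simp only [Walk.toSubgraph, Subgraph.sup_adj, subgraphOfAdj_adj, Sym2.eq_iff] at h
  grind

theorem IsInducedPath.exists_of_eq_or_adj {p : G.Walk x v} (hp : IsInducedPath G p)
    (hu : ∃ y ∈ p.support, u = y ∨ G.Adj u y) :
    ∃ q : G.Walk u v, IsInducedPath G q ∧ q.support ⊆ u :: p.support := by
  induction p with
  | nil =>
    obtain ⟨y, hy, h⟩ := hu
    obtain rfl : y = _ := by simpa using hy
    rcases h with rfl | h
    · exact ⟨Walk.nil, hp, by simp⟩
    · exact ⟨Walk.cons h Walk.nil, hp.cons h (by simpa using h.ne) (by simp), by simp⟩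
  | @cons x x' v hx p ih =>
    by_cases htail : ∃ y ∈ p.support, u = y ∨ G.Adj u y
    · obtain ⟨q, hq, hqs⟩ := ih hp.of_cons htail
      exact ⟨q, hq, fun y hy => by have := hqs hy; grind [Walk.support_cons]⟩
    · push Not at htail
      by_cases hux : u = x
      · subst hux
        exact ⟨Walk.cons hx p, hp, by simp⟩
      · have huadj : G.Adj u x := by grind [Walk.support_cons]
        exact ⟨Walk.cons huadj (Walk.cons hx p), hp.cons huadj (by grind [Walk.support_cons])
          (by grind [Walk.support_cons]), by simp⟩

theorem exists_isInducedPath (p : G.Walk u v) :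
    ∃ q : G.Walk u v, IsInducedPath G q ∧ q.support ⊆ p.support := by
  induction p with
  | nil => exact ⟨Walk.nil, ⟨Walk.IsPath.nil, by simp [IsInducedWalk]⟩, by simp⟩
  | cons h p ih =>
    obtain ⟨q, hq, hqs⟩ := ih
    obtain ⟨r, hr, hrs⟩ := hq.exists_of_eq_or_adj ⟨_, q.start_mem_support, Or.inr h⟩
    exact ⟨r, hr, fun y hy => by have := hrs hy; grind [Walk.support_cons]⟩

theorem two_le_length_of_not_adj (p : G.Walk u v) (huv : u ≠ v) (hadj : ¬ G.Adj u v) :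
    2 ≤ p.length := by
  by_contra hp
  interval_cases h : p.length
  · exact huv (Walk.eq_of_length_eq_zero h)
  · exact hadj (Walk.adj_of_length_eq_one h)

theorem start_notMem_tail_support {p : G.Walk u v} (hp : p.IsPath) :
    u ∉ p.support.tail := by
  have := hp.support_nodup
  rw [← Walk.cons_tail_support] at this
  exact (List.nodup_cons.1 this).1

theorem isCycle_append_reverse {p q : G.Walk u v} (hp : p.IsPath) (hq : q.IsPath)
    (hlen : 1 < p.length) (hpq : ∀ x ∈ p.support, x ∈ q.support → x = u ∨ x = v) :
    (p.append q.reverse).IsCycle := by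
  refine hp.isCycle_append hq.reverse (fun x hxp hxq => ?_) (Or.inl hlen)
  have hxq' : x ∈ q.support := by simpa using List.mem_of_mem_tail hxq
  rcases hpq x (List.mem_of_mem_tail hxp) hxq' with rfl | rfl
  · exact start_notMem_tail_support hp hxp
  · exact start_notMem_tail_support hq.reverse hxq

theorem isInducedWalk_append_reverse {p q : G.Walk u v} (hp : IsInducedWalk G p)
    (hq : IsInducedWalk G q)
    (hpq : ∀ x ∈ p.support, x ≠ u → x ≠ v → ∀ y ∈ q.support, y ≠ u → y ≠ v → ¬ G.Adj x y) :
    IsInducedWalk G (p.append q.reverse) := by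
  simp only [IsInducedWalk, Walk.mem_support_append_iff, Walk.support_reverse, List.mem_reverse,
    Walk.toSubgraph_append, Walk.toSubgraph_reverse, Subgraph.sup_adj]
  have mixed {x y : V} (hx : x ∈ p.support) (hy : y ∈ q.support) (hxy : G.Adj x y) :
      p.toSubgraph.Adj x y ∨ q.toSubgraph.Adj x y := by
    by_cases hxq : x ∈ q.support
    · exact Or.inr (hq x hxq y hy hxy)
    by_cases hyp : y ∈ p.support
    · exact Or.inl (hp x hx y hyp hxy)
    refine absurd hxy (hpq x hx ?_ ?_ y hy ?_ ?_)
    · rintro rfl; exact hxq q.start_mem_support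
    · rintro rfl; exact hxq q.end_mem_support
    · rintro rfl; exact hyp p.start_mem_support
    · rintro rfl; exact hyp p.end_mem_support
  rintro x (hx | hx) y (hy | hy) hxy
  · exact Or.inl (hp x hx y hy hxy)
  · exact mixed hx hy hxy
  · exact (mixed hy hx hxy.symm).imp Subgraph.Adj.symm Subgraph.Adj.symm
  · exact Or.inr (hq x hx y hy hxy)

theorem IsInducedPath.even_length_add_length {p q : G.Walk u v} (hp : IsInducedPath G p)
    (hq : IsInducedPath G q) (hG : ¬ HasOddHole G) (huv : u ≠ v) (hadj : ¬ G.Adj u v)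
    (hpq : ∀ x ∈ p.support, x ≠ u → x ≠ v → ∀ y ∈ q.support, y ≠ u → y ≠ v →
      x ≠ y ∧ ¬ G.Adj x y) :
    Even (p.length + q.length) := by
  have hp2 := two_le_length_of_not_adj p huv hadj
  have hq2 := two_le_length_of_not_adj q huv hadj
  by_contra hodd
  rw [Nat.not_even_iff_odd] at hodd
  have hlen : (p.append q.reverse).length = p.length + q.length := by simp
  refine hG ⟨u, p.append q.reverse, isCycle_append_reverse hp.1 hq.1 hp2 fun x hxp hxq => ?_,
    isInducedWalk_append_reverse hp.2 hq.2 fun x hx hxu hxv y hy hyu hyv =>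
      (hpq x hx hxu hxv y hy hyu hyv).2, hlen ▸ hodd, ?_⟩
  · by_contra! hx
    exact (hpq x hxp hx.1 hx.2 x hxq hx.1 hx.2).1 rfl
  · rcases hodd with ⟨k, hk⟩
    omega

/-- There is an induced path of length `l` from `u` to `v` whose interior lies in `S`. -/
def HasInducedPath (G : SimpleGraph V) (S : Set V) (l : ℕ) (u v : V) : Prop :=
  ∃ p : G.Walk u v, IsInducedPath G p ∧ InteriorIn G p S ∧ p.length = l

namespace HasInducedPath

theorem mono (hST : S ⊆ T) (h : HasInducedPath G S l u v) : HasInducedPath G T l u v := by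
  obtain ⟨p, hp, hpS, hl⟩ := h
  exact ⟨p, hp, fun x hx hxu hxv => hST (hpS x hx hxu hxv), hl⟩

theorem symm (h : HasInducedPath G S l u v) : HasInducedPath G S l v u := by
  obtain ⟨p, hp, hpS, hl⟩ := h
  exact ⟨p.reverse, hp.reverse,
    fun x hx hxv hxu => hpS x (by simpa using hx) hxu hxv, by simpa using hl⟩

theorem of_adj (h : G.Adj u v) : HasInducedPath G S 1 u v := by
  have hnil : IsInducedPath G (Walk.nil : G.Walk v v) :=
    ⟨Walk.IsPath.nil, by simp [IsInducedWalk]⟩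
  exact ⟨Walk.cons h Walk.nil, hnil.cons h (by simpa using h.ne) (by simp),
    by simp +contextual [InteriorIn], rfl⟩

theorem cons (h : HasInducedPath G S l x v) (hST : S ⊆ T) (hxT : x ∈ T) (hux : G.Adj u x)
    (huv : u ≠ v) (hnuv : ¬ G.Adj u v) (hu : ∀ y ∈ S, u ≠ y ∧ ¬ G.Adj u y) :
    HasInducedPath G T (l + 1) u v := by
  obtain ⟨p, hp, hpS, hl⟩ := h
  have mem_support {y : V} (hy : y ∈ p.support) : y = x ∨ y = v ∨ y ∈ S := by
    by_contra! h
    exact h.2.2 (hpS y hy h.1 h.2.1)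
  refine ⟨Walk.cons hux p, hp.cons hux (fun hup => ?_) (fun y hy huy => ?_),
    fun y hy hyu hyv => ?_, by simpa using hl⟩
  · rcases mem_support hup with h | h | h
    exacts [hux.ne h, huv h, (hu u h).1 rfl]
  · rcases mem_support hy with h | rfl | h
    exacts [h, absurd huy hnuv, absurd huy (hu y h).2]
  · have hy : y ∈ p.support := by simpa [hyu] using hy
    rcases mem_support hy with rfl | h | h
    exacts [hxT, absurd h hyv, hST h]

theorem two (hux : G.Adj u x) (hxv : G.Adj x v) (huv : u ≠ v) (hnuv : ¬ G.Adj u v)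
    (hx : x ∈ S) : HasInducedPath G S 2 u v :=
  (of_adj (S := ∅) hxv).cons (Set.empty_subset _) hx hux huv hnuv (by simp)

theorem three {y : V} (hux : G.Adj u x) (hxy : G.Adj x y) (hyv : G.Adj y v) (huv : u ≠ v)
    (hnuv : ¬ G.Adj u v) (huy : ¬ G.Adj u y) (hxv : ¬ G.Adj x v) (hx : x ∈ S) (hy : y ∈ S) :
    HasInducedPath G S 3 u v :=
  (two (S := {y}) hxy hyv (by rintro rfl; exact hnuv hux) hxv rfl).cons (by simpa using hy)
    hx hux huv hnuv (by rintro p rfl; exact ⟨by rintro rfl; exact hnuv hyv, huy⟩)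

theorem four {y z : V} (hux : G.Adj u x) (hxy : G.Adj x y) (hyz : G.Adj y z) (hzv : G.Adj z v)
    (huv : u ≠ v) (hnuv : ¬ G.Adj u v) (huy : ¬ G.Adj u y) (huz : ¬ G.Adj u z)
    (hxz : ¬ G.Adj x z) (hxv : ¬ G.Adj x v) (hyv : ¬ G.Adj y v)
    (hx : x ∈ S) (hy : y ∈ S) (hz : z ∈ S) : HasInducedPath G S 4 u v := by
  refine (three (S := {y, z}) hxy hyz hzv (by rintro rfl; exact hnuv hux) hxv hxz hyv (by simp)
    (by simp)).cons (by simp [Set.insert_subset_iff, hy, hz]) hx hux huv hnuv ?_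
  rintro p (rfl | rfl)
  · exact ⟨by rintro rfl; exact huz hyz, huy⟩
  · exact ⟨by rintro rfl; exact hnuv hzv, huz⟩

theorem even_add (hP : HasInducedPath G S l u v) (hQ : HasInducedPath G T m u v)
    (hG : ¬ HasOddHole G) (huv : u ≠ v) (hnuv : ¬ G.Adj u v)
    (hST : ∀ x ∈ S, x ≠ u → x ≠ v → ∀ y ∈ T, x ≠ y ∧ ¬ G.Adj x y) : Even (l + m) := by
  obtain ⟨p, hp, hpS, rfl⟩ := hP
  obtain ⟨q, hq, hqT, rfl⟩ := hQ
  exact hp.even_length_add_length hq hG huv hnuv fun x hx hxu hxv y hy hyu hyv =>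
    hST x (hpS x hx hxu hxv) hxu hxv y (hqT y hy hyu hyv)

end HasInducedPath

theorem exists_hasInducedPath_of_connected (hS : (G.induce S).Connected) (hu : u ∈ S)
    (hv : v ∈ S) : ∃ l, HasInducedPath G (S \ {u, v}) l u v := by
  obtain ⟨p⟩ := hS.preconnected ⟨u, hu⟩ ⟨v, hv⟩
  obtain ⟨q, hq, hqs⟩ := exists_isInducedPath (p.map (Embedding.induce S).toHom)
  refine ⟨q.length, q, hq, fun x hx hxu hxv => ⟨?_, by simp [hxu, hxv]⟩, rfl⟩
  have := hqs hx
  rw [Walk.support_map, List.mem_map] at this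
  obtain ⟨y, -, rfl⟩ := this
  exact y.2

theorem not_hasOddHole_induce (hG : ¬ HasOddHole G) (S : Set V) : ¬ HasOddHole (G.induce S) := by
  rintro ⟨v, p, hp, hind, hodd, hlen⟩
  let f := (Embedding.induce S : G.induce S ↪g G).toHom
  refine hG ⟨f v, p.map f, hp.map Subtype.val_injective, ?_, by simpa using hodd,
    by simpa using hlen⟩
  simp only [IsInducedWalk, Walk.support_map, List.mem_map, Walk.toSubgraph_map]
  rintro _ ⟨x, hx, rfl⟩ _ ⟨y, hy, rfl⟩ hxy
  exact ⟨x, y, hind x hx y hy hxy, rfl, rfl⟩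

end InducedPath

section Coloring

variable {G : SimpleGraph V} {S : Set V} {n : ℕ}

theorem colorable_induce_of_subset_iUnion {ι : Type*} [Fintype ι] {T : ι → Set V}
    (hS : S ⊆ ⋃ i, T i) (hT : ∀ i, (G.induce (T i)).Colorable n) :
    (G.induce S).Colorable (Fintype.card ι * n) := by
  choose i hi using fun v : S => Set.mem_iUnion.1 (hS v.2)
  let C (j : ι) : (G.induce (T j)).Coloring (Fin n) := (hT j).some
  let c : (G.induce S).Coloring (ι × Fin n) :=
    Coloring.mk (fun v => (i v, C (i v) ⟨v, hi v⟩)) fun {u v} huv heq => by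
      obtain ⟨hidx, hcol⟩ := Prod.mk.inj heq
      have hu : (u : V) ∈ T (i v) := hidx ▸ hi u
      have : C (i u) ⟨u, hi u⟩ = C (i v) ⟨u, hu⟩ := by congr!
      exact (C (i v)).valid (v := ⟨u, hu⟩) (w := ⟨v, hi v⟩) huv (this ▸ hcol)
  simpa using c.colorable

theorem colorable_induce_of_forall_connected
    (h : ∀ T ⊆ S, (G.induce T).Connected → (G.induce T).Colorable n) :
    (G.induce S).Colorable n := by
  refine colorable_iff_forall_connectedComponent.2 fun c => ?_
  let T : Set V := Subtype.val '' c.supp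
  let e : c.toSimpleGraph ≃g G.induce T :=
    { Equiv.Set.image _ c.supp Subtype.val_injective with map_rel_iff' := Iff.rfl }
  have hT : (G.induce T).Connected := e.connected_iff.1 c.connected_toSimpleGraph
  exact (h T (Subtype.coe_image_subset S c.supp) hT).of_hom e.toHom

theorem cliqueFree_induce_of_common_neighbor (hG : G.CliqueFree (n + 2))
    (hS : ∀ s : Finset V, ↑s ⊆ S → G.IsClique s → s.Nonempty → ∃ x, ∀ v ∈ s, G.Adj x v) :
    (G.induce S).CliqueFree (n + 1) := by
  classical
  rw [cliqueFree_induce_iff]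
  intro s hs hclq
  have hne : s.Nonempty := Finset.card_pos.1 (hclq.card_eq ▸ n.succ_pos)
  obtain ⟨x, hx⟩ := hS s hs hclq.isClique hne
  exact hG _ (hclq.insert hx)

end Coloring

section Depth

variable {G : SimpleGraph V} {u v : V} {m : ℕ}

/-- The distance from `v` to a root chosen arbitrarily in its connected component. -/
noncomputable def depth (G : SimpleGraph V) (v : V) : ℕ :=
  G.dist (G.connectedComponentMk v).out v

theorem reachable_out_connectedComponentMk (G : SimpleGraph V) (v : V) :
    G.Reachable (G.connectedComponentMk v).out v :=
  ConnectedComponent.exact (G.connectedComponentMk v).out_eq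

theorem depth_le_depth_add_one (h : G.Adj u v) : depth G v ≤ depth G u + 1 := by
  have hroot : G.connectedComponentMk v = G.connectedComponentMk u :=
    (ConnectedComponent.connectedComponentMk_eq_of_adj h).symm
  unfold depth
  rw [hroot]
  obtain ⟨p, hp⟩ := (reachable_out_connectedComponentMk G u).exists_walk_length_eq_dist
  simpa [hp] using dist_le (p.concat h)

theorem ne_and_not_adj_of_depth_add_two_le (h : depth G u + 2 ≤ depth G v) :
    u ≠ v ∧ ¬ G.Adj u v := by
  refine ⟨by rintro rfl; omega, fun huv => ?_⟩
  have := depth_le_depth_add_one huv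
  omega

theorem exists_adj_depth_eq (h : depth G v = m + 1) : ∃ u, G.Adj u v ∧ depth G u = m := by
  obtain ⟨p, hp⟩ := (reachable_out_connectedComponentMk G v).symm.exists_walk_length_eq_dist
  rw [dist_comm, ← depth.eq_def, h] at hp
  have hnil : ¬ p.Nil := Walk.not_nil_iff_lt_length.2 (by omega)
  have hadj := p.adj_snd hnil
  have hroot : G.connectedComponentMk p.snd = G.connectedComponentMk v :=
    (ConnectedComponent.connectedComponentMk_eq_of_adj hadj).symm
  have hlen := p.length_tail_add_one hnil
  refine ⟨p.snd, hadj.symm, le_antisymm ?_ ?_⟩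
  · rw [depth, hroot, dist_comm]
    exact (dist_le p.tail).trans (by omega)
  · have := depth_le_depth_add_one hadj.symm
    omega

theorem eq_of_reachable_of_depth_eq_zero (h : G.Reachable u v) (hu : depth G u = 0)
    (hv : depth G v = 0) : u = v := by
  have root_eq {w : V} (hw : depth G w = 0) : (G.connectedComponentMk w).out = w :=
    (reachable_out_connectedComponentMk G w).dist_eq_zero_iff.1 hw
  rw [← root_eq hu, ← root_eq hv, ConnectedComponent.sound h]

theorem colorable_induce_depth_zero (hm : 0 < m) : (G.induce {v | depth G v = 0}).Colorable m :=
  ⟨Coloring.mk (fun _ => ⟨0, hm⟩) fun {u v} huv =>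
    absurd (Subtype.ext (eq_of_reachable_of_depth_eq_zero (Adj.reachable huv) u.2 v.2)) huv.ne⟩

theorem colorable_two_mul_of_depth
    (h : ∀ i, (G.induce {v | depth G v = i}).Colorable m) : G.Colorable (2 * m) := by
  let C (i : ℕ) : (G.induce {v | depth G v = i}).Coloring (Fin m) := (h i).some
  let c : G.Coloring (ZMod 2 × Fin m) :=
    Coloring.mk (fun v => ((depth G v : ZMod 2), C (depth G v) ⟨v, rfl⟩)) fun {u v} huv heq => by
      obtain ⟨hpar, hcol⟩ := Prod.mk.inj heq
      have h1 := depth_le_depth_add_one huv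
      have h2 := depth_le_depth_add_one huv.symm
      have hdepth : depth G u = depth G v := by
        rw [ZMod.natCast_eq_natCast_iff'] at hpar
        omega
      have : C (depth G u) ⟨u, rfl⟩ = C (depth G v) ⟨u, hdepth⟩ := by congr!
      exact (C (depth G v)).valid (v := ⟨u, hdepth⟩) (w := ⟨v, rfl⟩) huv (this ▸ hcol)
  simpa using c.colorable

end Depth

section GapWalk

variable {X Y : Type*} {R : SimpleGraph Y} {N : Y → Set X} {H : SimpleGraph X} {m n i j : ℕ}
  {a b c y z : Y}

theorem isCograph_iff : IsCograph H ↔ ∀ a b c d, H.Adj a b → H.Adj b c → H.Adj c d →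
    ¬ H.Adj a c → ¬ H.Adj b d → H.Adj a d := by
  refine ⟨fun h a b c d hab hbc hcd hac hbd => ?_, fun h => ?_⟩
  · by_contra had
    refine h ⟨a, b, c, d, ?_, ?_, ?_, hab, hbc, hcd, hac, had, hbd⟩
    · rintro rfl; exact had hcd
    · rintro rfl; exact hac hcd.symm
    · rintro rfl; exact had hab
  · rintro ⟨a, b, c, d, -, -, -, hab, hbc, hcd, hac, had, hbd⟩
    exact had (h a b c d hab hbc hcd hac hbd)

/-- A walk of `n ≥ 1` edges, from its first edge `ab` to its last edge `yz`, in which vertices two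
steps apart are distinct and nonadjacent; vertices further apart are not restricted. -/
inductive GapWalk (R : SimpleGraph Y) : ℕ → Y → Y → Y → Y → Prop
  | edge {a b : Y} : R.Adj a b → GapWalk R 1 a b a b
  | snoc {n : ℕ} {a b y z w : Y} : GapWalk R n a b y z → R.Adj z w → y ≠ w → ¬ R.Adj y w →
      GapWalk R (n + 1) a b z w

namespace GapWalk

theorem pos (h : GapWalk R n a b y z) : 0 < n := by
  cases h <;> omega

theorem cons (h : GapWalk R n b c y z) (hab : R.Adj a b) (hac : a ≠ c) (hnac : ¬ R.Adj a c) :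
    GapWalk R (n + 1) a b y z := by
  induction h with
  | edge hbc => exact (edge hab).snoc hbc hac hnac
  | snoc _ hzw hyw hnyw ih => exact (ih hab hac hnac).snoc hzw hyw hnyw

theorem reverse (h : GapWalk R n a b y z) : GapWalk R n z y b a := by
  induction h with
  | edge hab => exact edge hab.symm
  | snoc _ hzw hyw hnyw ih => exact ih.cons hzw.symm hyw.symm fun h => hnyw h.symm

theorem exists_eq_snoc (h : GapWalk R (n + 2) a b y z) :
    ∃ w, GapWalk R (n + 1) a b w y ∧ R.Adj y z ∧ w ≠ z ∧ ¬ R.Adj w z := by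
  cases h with
  | snoc h hyz hwz hnwz => exact ⟨_, h, hyz, hwz, hnwz⟩

theorem exists_eq_cons (h : GapWalk R (n + 2) a b y z) :
    ∃ c, GapWalk R (n + 1) b c y z ∧ R.Adj a b ∧ a ≠ c ∧ ¬ R.Adj a c := by
  obtain ⟨c, hc, hba, hca, hnca⟩ := h.reverse.exists_eq_snoc
  exact ⟨c, hc.reverse, hba.symm, hca.symm, fun h => hnca h.symm⟩

theorem adj_first (h : GapWalk R n a b y z) : R.Adj a b := by
  induction h with
  | edge hab => exact hab
  | snoc _ _ _ _ ih => exact ih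

theorem exists_depth_eq_zero (h : GapWalk R n a b y z) (hyz : depth R y = depth R z + 1) :
    ∃ r' r, GapWalk R (n + depth R z) a b r' r ∧ depth R r = 0 ∧ R.Reachable z r := by
  induction hj : depth R z generalizing n y z with
  | zero => exact ⟨y, z, h, hj, Reachable.rfl⟩
  | succ j ih =>
    obtain ⟨q, hqz, hq⟩ := exists_adj_depth_eq hj
    have hqy : q ≠ y ∧ ¬ R.Adj q y := ne_and_not_adj_of_depth_add_two_le (by omega)
    obtain ⟨r', r, hr, hr0, hqr⟩ :=
      ih (h.snoc hqz.symm hqy.1.symm fun h => hqy.2 h.symm) (by rw [hj, hq]) hq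
    exact ⟨r', r, by convert hr using 1; omega, hr0, hqz.symm.reachable.trans hqr⟩

end GapWalk

/-- A representation of the vertices of `R` by sets of vertices of a cograph `H` in which adjacent
vertices get `H`-complete sets while vertices at distance two do not. It expresses the constraints
put on a graph without odd holes by the parities of the induced paths outside it. -/
structure ParityRep (R : SimpleGraph Y) (N : Y → Set X) (H : SimpleGraph X) : Prop where
  cograph : IsCograph H
  nonempty : ∀ {y z}, R.Adj y z → (N y).Nonempty
  adj : ∀ {y z}, R.Adj y z → ∀ x ∈ N y, ∀ x' ∈ N z, H.Adj x x'
  exists_not_adj : ∀ {a b c}, R.Adj a b → R.Adj b c → a ≠ c → ¬ R.Adj a c →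
    ∀ x ∈ N a, ∃ x' ∈ N c, ¬ H.Adj x x'

namespace ParityRep

theorem induce (h : ParityRep R N H) (S : Set Y) :
    ParityRep (R.induce S) (fun y => N y) H where
  cograph := h.cograph
  nonempty hy := h.nonempty hy
  adj hy := h.adj hy
  exists_not_adj hab hbc hac hn := h.exists_not_adj hab hbc (fun h => hac (Subtype.ext h)) hn

theorem adj_of_gaps (h : ParityRep R N H) {w : Y} (hab : R.Adj a b) (hbc : R.Adj b c) (hac : a ≠ c)
    (hnac : ¬ R.Adj a c) (hwy : R.Adj w y) (hyz : R.Adj y z) (hwz : w ≠ z) (hnwz : ¬ R.Adj w z)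
    (haw : ∀ x ∈ N a, ∀ x' ∈ N w, H.Adj x x') (hwc : ∀ x ∈ N w, ∀ x' ∈ N c, H.Adj x x')
    (hcz : ∀ x ∈ N c, ∀ x' ∈ N z, H.Adj x x') :
    ∀ x ∈ N a, ∀ x' ∈ N z, H.Adj x x' := by
  intro x hx x' hx'
  obtain ⟨s, hs, hxs⟩ := h.exists_not_adj hab hbc hac hnac x hx
  obtain ⟨t, ht, hxt⟩ :=
    h.exists_not_adj hyz.symm hwy.symm hwz.symm (fun h => hnwz h.symm) x' hx'
  exact isCograph_iff.1 h.cograph _ _ _ _ (haw x hx t ht) (hwc t ht s hs) (hcz s hs x' hx') hxs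
    fun h => hxt h.symm

theorem adj_of_gapWalk (h : ParityRep R N H) (hw : GapWalk R n a b y z) (hn : Odd n) :
    ∀ x ∈ N a, ∀ x' ∈ N z, H.Adj x x' := by
  induction n using Nat.strong_induction_on generalizing a b y z with
  | _ n ih =>
    obtain ⟨k, rfl⟩ := hn
    match k, ih, hw with
    | 0, _, .edge hab => exact h.adj hab
    | 0, _, .snoc hw _ _ _ => exact absurd hw.pos (lt_irrefl 0)
    | 1, ih, hw =>
      obtain ⟨c, hw, hab, hac, hnac⟩ := hw.exists_eq_cons
      obtain ⟨d, hw, hbc, hbd, hnbd⟩ := hw.exists_eq_cons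
      cases hw with
      | edge hcz =>
        exact h.adj_of_gaps hab hbc hac hnac hbc hcz hbd hnbd (h.adj hab) (h.adj hbc) (h.adj hcz)
      | snoc hw _ _ _ => exact absurd hw.pos (lt_irrefl 0)
    | k + 2, ih, hw =>
      obtain ⟨c, hw, hab, hac, hnac⟩ := hw.exists_eq_cons
      obtain ⟨d, hcz, hbc, hbd, hnbd⟩ := hw.exists_eq_cons
      obtain ⟨w, hw, hyz, hwz, hnwz⟩ := hcz.exists_eq_snoc
      obtain ⟨v, hcw, hwy, -, -⟩ := hw.exists_eq_snoc
      have haw := (hcw.cons hbc hbd hnbd).cons hab hac hnac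
      refine h.adj_of_gaps hab hbc hac hnac hwy hyz hwz hnwz
        (ih (2 * (k + 1) + 1) (by omega) haw ⟨k + 1, rfl⟩) (fun x hx x' hx' => ?_)
        (ih (2 * (k + 1) + 1) (by omega) hcz ⟨k + 1, rfl⟩)
      exact (ih (2 * k + 1) (by omega) hcw ⟨k, rfl⟩ x' hx' x hx).symm

theorem adj_of_path_three (h : ParityRep R N H) {d : Y} (hab : R.Adj a b) (hbc : R.Adj b c)
    (hcd : R.Adj c d) (hac : a ≠ c) (hnac : ¬ R.Adj a c) (hbd : b ≠ d) (hnbd : ¬ R.Adj b d) :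
    ∀ x ∈ N a, ∀ x' ∈ N d, H.Adj x x' :=
  h.adj_of_gapWalk (((GapWalk.edge hab).snoc hbc hac hnac).snoc hcd hbd hnbd) (by decide)

-- Otherwise the edge `uv` and shortest paths from `u` through `p` and from `v` through `q` to the
-- root of their component close up to a gapped walk of odd length from the root to itself.
theorem adj_or_adj_of_depth_eq (h : ParityRep R N H) {u v p q : Y} (hu : depth R u = j + 1)
    (hv : depth R v = j + 1) (hp : depth R p = j) (hq : depth R q = j) (huv : R.Adj u v)
    (hpu : R.Adj p u) (hqv : R.Adj q v) : R.Adj p v ∨ R.Adj q u := by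
  by_contra! ⟨hpv, hqu⟩
  have ne_of_depth {y z : Y} (hy : depth R y = j) (hz : depth R z = j + 1) : y ≠ z := by
    rintro rfl
    omega
  obtain ⟨r', r, hr, hr0, hpr⟩ := (GapWalk.edge hpu.symm).exists_depth_eq_zero (by rw [hu, hp])
  have hw := (hr.reverse.snoc huv (ne_of_depth hp hv) hpv).snoc hqv.symm (ne_of_depth hq hu).symm
    fun h => hqu h.symm
  obtain ⟨s', s, hs, hs0, hqs⟩ := hw.exists_depth_eq_zero (by rw [hv, hq])
  have hrs : R.Reachable r s :=
    hpr.symm.trans <| hpu.reachable.trans <| huv.reachable.trans <| hqv.symm.reachable.trans hqs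
  obtain rfl := eq_of_reachable_of_depth_eq_zero hrs hr0 hs0
  obtain ⟨x, hx⟩ := h.nonempty hs.adj_first
  exact H.irrefl (h.adj_of_gapWalk hs ⟨j + 1, by omega⟩ x hx x hx)

theorem false_of_bull (h : ParityRep R N H) {p u v q g : Y} (hpu : R.Adj p u) (huv : R.Adj u v)
    (huq : R.Adj u q) (hqv : R.Adj q v) (hqg : R.Adj q g) (hpq : p ≠ q ∧ ¬ R.Adj p q)
    (hpv : p ≠ v ∧ ¬ R.Adj p v) (hug : u ≠ g ∧ ¬ R.Adj u g) (hvg : v ≠ g ∧ ¬ R.Adj v g) :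
    False := by
  obtain ⟨x, hx⟩ := h.nonempty hpu
  obtain ⟨xq, hxq, hnq⟩ := h.exists_not_adj hpu huq hpq.1 hpq.2 x hx
  obtain ⟨xv, hxv, hnv⟩ := h.exists_not_adj hpu huv hpv.1 hpv.2 x hx
  obtain ⟨xg, hxg, hng⟩ := h.exists_not_adj hqv.symm hqg hvg.1 hvg.2 xv hxv
  have hpg := h.adj_of_path_three hpu huq hqg hpq.1 hpq.2 hug.1 hug.2 x hx xg hxg
  exact hnv <| isCograph_iff.1 h.cograph _ _ _ _ hpg (h.adj hqg.symm xg hxg xq hxq)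
    (h.adj hqv xq hxq xv hxv) hnq fun h => hng h.symm

theorem parent_adj (h : ParityRep R N H) {u v p : Y} (hu : depth R u = j + 1)
    (hv : depth R v = j + 1) (hp : depth R p = j) (huv : R.Adj u v) (hpu : R.Adj p u) :
    R.Adj p v := by
  induction j generalizing u v p with
  | zero =>
    obtain ⟨q, hqv, hq⟩ := exists_adj_depth_eq hv
    have hpq := hpu.reachable.trans (huv.reachable.trans hqv.symm.reachable)
    exact eq_of_reachable_of_depth_eq_zero hpq hp hq ▸ hqv
  | succ j ih =>
    have far {y z : Y} (hy : depth R y = j + 2) (hz : depth R z = j) : y ≠ z ∧ ¬ R.Adj y z :=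
      (ne_and_not_adj_of_depth_add_two_le (by omega)).imp Ne.symm fun h h' => h h'.symm
    obtain ⟨q, hqv, hq⟩ := exists_adj_depth_eq hv
    refine (h.adj_or_adj_of_depth_eq hu hv hp hq huv hpu hqv).elim id fun hqu => ?_
    by_contra hpv
    have hpv' : p ≠ v := by
      rintro rfl
      omega
    by_cases hpq : R.Adj p q
    · obtain ⟨g, hgp, hg⟩ := exists_adj_depth_eq hp
      obtain ⟨x, hx⟩ := h.nonempty hqv.symm
      have hgq := ih hp hq hg hpq hgp
      obtain ⟨x', hx', hn⟩ :=
        h.exists_not_adj hqv.symm hgq.symm (far hv hg).1 (far hv hg).2 x hx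
      exact hn (h.adj_of_path_three huv.symm hpu.symm hgp.symm hpv'.symm (fun h => hpv h.symm)
        (far hu hg).1 (far hu hg).2 x hx x' hx')
    · have hne : p ≠ q := by
        rintro rfl
        exact hpv hqv
      obtain ⟨g, hgq, hg⟩ := exists_adj_depth_eq hq
      exact h.false_of_bull hpu huv hqu.symm hqv hgq.symm ⟨hne, hpq⟩ ⟨hpv', hpv⟩ (far hu hg)
        (far hv hg)

theorem cliqueFree_induce_depth_eq (h : ParityRep R N H) (hR : R.CliqueFree (m + 3)) (i : ℕ) :
    (R.induce {y | depth R y = i}).CliqueFree (m + 2) := by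
  obtain _ | j := i
  · exact (colorable_induce_depth_zero one_pos).cliqueFree (by omega)
  · refine cliqueFree_induce_of_common_neighbor hR fun s hs hclq ⟨u, hu⟩ => ?_
    obtain ⟨p, hpu, hp⟩ := exists_adj_depth_eq (hs hu)
    refine ⟨p, fun v hv => ?_⟩
    obtain rfl | huv := eq_or_ne u v
    · exact hpu
    · exact h.parent_adj (hs hu) (hs hv) hp (hclq hu hv huv) hpu

theorem colorable {Y : Type*} {R : SimpleGraph Y} {N : Y → Set X} (h : ParityRep R N H)
    (hR : R.CliqueFree (m + 2)) : R.Colorable (2 ^ m) := by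
  induction m generalizing Y with
  | zero =>
    rw [cliqueFree_two] at hR
    exact hR ▸ ⟨Coloring.mk (fun _ => 0) (by simp)⟩
  | succ m ih =>
    rw [pow_succ']
    exact colorable_two_mul_of_depth fun i =>
      ih (h.induce _) (h.cliqueFree_induce_depth_eq hR i)

end ParityRep

end GapWalk

section Attachment

variable {G : SimpleGraph V} {S T X Y D : Set V} {k m n q : ℕ} {u v : V}

/-- The graph joining distinct vertices which are the ends of an induced path of `G` of odd length
with interior in `D`. -/
def oddGraph (G : SimpleGraph V) (D : Set V) : SimpleGraph V where
  Adj u v := u ≠ v ∧ ∃ l, Odd l ∧ HasInducedPath G D l u v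
  symm := ⟨fun _ _ ⟨huv, l, hl, h⟩ => ⟨huv.symm, l, hl, h.symm⟩⟩
  loopless := ⟨fun _ h => h.1 rfl⟩

theorem oddGraph_adj_iff_of_even_add (huv : u ≠ v) (hl : ∃ l, HasInducedPath G D l u v)
    (h : ∀ l, HasInducedPath G D l u v → Even (l + k)) : (oddGraph G D).Adj u v ↔ Odd k := by
  constructor
  · rintro ⟨-, l, hl, hP⟩
    exact (Nat.even_add.1 (h l hP)).not.1 (Nat.not_even_iff_odd.2 hl) |> Nat.not_even_iff_odd.1
  · intro hk
    obtain ⟨l, hP⟩ := hl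
    refine ⟨huv, l, ?_, hP⟩
    rw [← Nat.not_even_iff_odd] at hk ⊢
    rwa [Nat.even_add.1 (h l hP)]

theorem isCograph_induce_mono {H : SimpleGraph V} (hST : S ⊆ T) (h : IsCograph (H.induce T)) :
    IsCograph (H.induce S) := by
  rw [isCograph_iff] at h ⊢
  exact fun a b c d => h (Set.inclusion hST a) (Set.inclusion hST b) (Set.inclusion hST c)
    (Set.inclusion hST d)

/-- A set `Y` of vertices with neighbours in `X` and anticomplete to `D`, where the vertices of `X`
are joined through `D` and the parities of the paths joining them are those of a cograph. -/
structure Attachment (G : SimpleGraph V) (X Y D : Set V) : Prop where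
  exists_adj : ∀ y ∈ Y, ∃ x ∈ X, G.Adj x y
  anticomplete : ∀ d ∈ D, ∀ y ∈ Y, d ≠ y ∧ ¬ G.Adj d y
  exists_path : ∀ x ∈ X, ∀ x' ∈ X, x ≠ x' → ∃ l, HasInducedPath G D l x x'
  cograph : ∀ T ⊆ X, G.IsIndepSet T → IsCograph ((oddGraph G D).induce T)

namespace Attachment

variable {x x' y y' : V}

theorem oddGraph_adj_iff (h : Attachment G X Y D) (hG : ¬ HasOddHole G) (hx : x ∈ X)
    (hx' : x' ∈ X) (hne : x ≠ x') (hadj : ¬ G.Adj x x') (hk : HasInducedPath G Y k x x') :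
    (oddGraph G D).Adj x x' ↔ Odd k :=
  oddGraph_adj_iff_of_even_add hne (h.exists_path x hx x' hx' hne) fun _ hl =>
    hl.even_add hk hG hne hadj fun d hd _ _ => h.anticomplete d hd

theorem not_oddGraph_adj_of_common (h : Attachment G X Y D) (hG : ¬ HasOddHole G)
    (hX : G.IsIndepSet X) (hx : x ∈ X) (hx' : x' ∈ X) (hy : y ∈ Y) (hxy : G.Adj x y)
    (hx'y : G.Adj x' y) : ¬ (oddGraph G D).Adj x x' := by
  obtain rfl | hne := eq_or_ne x x'
  · exact SimpleGraph.irrefl _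
  · have hP : HasInducedPath G Y 2 x x' := .two hxy hx'y.symm hne (hX hx hx' hne) hy
    rw [h.oddGraph_adj_iff hG hx hx' hne (hX hx hx' hne) hP]
    decide

theorem oddGraph_adj_of_adj (h : Attachment G X Y D) (hG : ¬ HasOddHole G) (hX : G.IsIndepSet X)
    (hx : x ∈ X) (hx' : x' ∈ X) (hy : y ∈ Y) (hy' : y' ∈ Y) (hyy' : G.Adj y y')
    (hxy : G.Adj x y) (hx'y' : G.Adj x' y') (hxy' : ¬ G.Adj x y') (hx'y : ¬ G.Adj x' y) :
    (oddGraph G D).Adj x x' := by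
  have hne : x ≠ x' := by
    rintro rfl
    exact hx'y hxy
  have hP : HasInducedPath G Y 3 x x' := .three hxy hyy' hx'y'.symm hne (hX hx hx' hne) hxy'
    (fun h => hx'y h.symm) hy hy'
  rw [h.oddGraph_adj_iff hG hx hx' hne (hX hx hx' hne) hP]
  decide

/-- The graph on `Y` of the edges of `G` whose ends have no common neighbour in `X`. -/
def farGraph (G : SimpleGraph V) (X Y : Set V) : SimpleGraph Y where
  Adj a b := G.Adj a b ∧ ∀ x ∈ X, ¬ (G.Adj x a ∧ G.Adj x b)
  symm := ⟨fun _ _ h => ⟨h.1.symm, fun x hx hab => h.2 x hx hab.symm⟩⟩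
  loopless := ⟨fun _ h => G.irrefl h.1⟩

theorem exists_adj_not_oddGraph_adj (h : Attachment G X Y D) (hG : ¬ HasOddHole G)
    (hX : G.IsIndepSet X) {a b c : Y} (hab : (farGraph G X Y).Adj a b)
    (hbc : (farGraph G X Y).Adj b c) (hnac : ¬ (farGraph G X Y).Adj a c)
    (hx : x ∈ X) (hxa : G.Adj x a) : ∃ x' ∈ X, G.Adj x' c ∧ ¬ (oddGraph G D).Adj x x' := by
  by_cases hadj : G.Adj a c
  · obtain ⟨z, hz, hza, hzc⟩ : ∃ z ∈ X, G.Adj z a ∧ G.Adj z c := by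
      by_contra! hcon
      exact hnac ⟨hadj, fun z hz hzac => hcon z hz hzac.1 hzac.2⟩
    exact ⟨z, hz, hzc, h.not_oddGraph_adj_of_common hG hX hx hz a.2 hxa hza⟩
  by_cases hxc : G.Adj x c
  · exact ⟨x, hx, hxc, SimpleGraph.irrefl _⟩
  obtain ⟨x', hx', hx'c⟩ := h.exists_adj c c.2
  refine ⟨x', hx', hx'c, ?_⟩
  by_cases hx'a : G.Adj x' a
  · exact h.not_oddGraph_adj_of_common hG hX hx hx' a.2 hxa hx'a
  have hne : x ≠ x' := by
    rintro rfl
    exact hxc hx'c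
  have hP : HasInducedPath G Y 4 x x' := .four hxa hab.1 hbc.1 hx'c.symm hne (hX hx hx' hne)
    (fun hxb => hab.2 x hx ⟨hxa, hxb⟩) hxc hadj (fun h => hx'a h.symm)
    (fun hbx' => hbc.2 x' hx' ⟨hbx'.symm, hx'c⟩) a.2 b.2 c.2
  rw [h.oddGraph_adj_iff hG hx hx' hne (hX hx hx' hne) hP]
  decide

theorem parityRep (h : Attachment G X Y D) (hG : ¬ HasOddHole G) (hX : G.IsIndepSet X) :
    ParityRep (farGraph G X Y) (fun y => {x : X | G.Adj x y}) ((oddGraph G D).induce X) where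
  cograph := h.cograph X subset_rfl hX
  nonempty {y _} _ := by
    obtain ⟨x, hx, hxy⟩ := h.exists_adj y y.2
    exact ⟨⟨x, hx⟩, hxy⟩
  adj {y y'} hyy' x hxy x' hxy' :=
    h.oddGraph_adj_of_adj hG hX x.2 x'.2 y.2 y'.2 hyy'.1 hxy hxy'
      (fun hh => hyy'.2 x x.2 ⟨hxy, hh⟩) (fun hh => hyy'.2 x' x'.2 ⟨hh, hxy'⟩)
  exists_not_adj hab hbc _ hnac x hxa := by
    obtain ⟨x', hx', hx'c, hxx'⟩ := h.exists_adj_not_oddGraph_adj hG hX hab hbc hnac x.2 hxa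
    exact ⟨⟨x', hx'⟩, hx'c, hxx'⟩

theorem exists_common_neighbor (h : Attachment G X Y D) (hG : ¬ HasOddHole G)
    (hX : G.IsIndepSet X) {s : Finset V} (hsY : ↑s ⊆ Y) (hclq : G.IsClique s) (hs : s.Nonempty)
    (hpair : ∀ a ∈ s, ∀ b ∈ s, ∃ x ∈ X, G.Adj x a ∧ G.Adj x b) :
    ∃ x ∈ X, ∀ v ∈ s, G.Adj x v := by
  induction hs using Finset.Nonempty.cons_induction with
  | singleton a => simpa using hpair a
  | cons a s ha hs ih =>
    simp only [Finset.coe_cons, Set.insert_subset_iff, Finset.mem_cons, forall_eq_or_imp] at *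
    obtain ⟨x, hx, hxs⟩ := ih hsY.2 (hclq.subset (Set.subset_insert _ _))
      fun b hb => ((hpair.2 b hb).2)
    by_cases hxa : G.Adj x a
    · exact ⟨x, hx, hxa, hxs⟩
    obtain ⟨b, hb⟩ := hs
    obtain ⟨x', hx', hx'a, hx'b⟩ := hpair.1.2 b hb
    refine ⟨x', hx', hx'a, fun c hc => ?_⟩
    by_contra hx'c
    have hac : G.Adj a c := hclq (by simp) (by simp [hc]) (by rintro rfl; exact ha hc)
    exact h.not_oddGraph_adj_of_common hG hX hx' hx (hsY.2 hb) hx'b (hxs b hb) <|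
      h.oddGraph_adj_of_adj hG hX hx' hx hsY.1 (hsY.2 hc) hac hx'a (hxs c hc) hx'c hxa

theorem colorable_of_isIndepSet (h : Attachment G X Y D) (hG : ¬ HasOddHole G)
    (hX : G.IsIndepSet X) (hclq : G.CliqueFree (m + 2))
    (hn : ∀ S, (G.induce S).CliqueFree (m + 1) → (G.induce S).Colorable n) :
    (G.induce Y).Colorable (2 ^ m * n) := by
  have hfar : (farGraph G X Y).CliqueFree (m + 2) :=
    (hclq.comap (Embedding.induce Y).isContained).anti fun _ _ hab => hab.1
  obtain ⟨c⟩ := (h.parityRep hG hX).colorable hfar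
  rw [← Fintype.card_fin (2 ^ m)]
  refine colorable_induce_of_subset_iUnion (T := fun i => {y | ∃ hy : y ∈ Y, c ⟨y, hy⟩ = i})
    (fun y hy => Set.mem_iUnion.2 ⟨_, hy, rfl⟩) fun i => hn _ ?_
  refine cliqueFree_induce_of_common_neighbor hclq fun s hs hsclq hne => ?_
  have hsY : ↑s ⊆ Y := fun y hy => (hs hy).1
  obtain ⟨x, -, hx⟩ := h.exists_common_neighbor hG hX hsY hsclq hne fun a ha b hb => by
    obtain rfl | hab := eq_or_ne a b
    · simpa using h.exists_adj a (hsY ha)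
    by_contra! hcon
    obtain ⟨ha', hca⟩ := hs ha
    obtain ⟨hb', hcb⟩ := hs hb
    exact c.valid (v := ⟨a, ha'⟩) (w := ⟨b, hb'⟩)
      ⟨hsclq ha hb hab, fun x hx hxab => hcon x hx hxab.1 hxab.2⟩ (hca.trans hcb.symm)
  exact ⟨x, hx⟩

theorem restrict (h : Attachment G X Y D) (hTX : T ⊆ X) :
    Attachment G T {y | y ∈ Y ∧ ∃ x ∈ T, G.Adj x y} D where
  exists_adj _ hy := hy.2
  anticomplete d hd y hy := h.anticomplete d hd y hy.1
  exists_path x hx x' hx' := h.exists_path x (hTX hx) x' (hTX hx')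
  cograph S hS := h.cograph S (hS.trans hTX)

theorem colorable (h : Attachment G X Y D) (hG : ¬ HasOddHole G)
    (hX : (G.induce X).Colorable q) (hclq : G.CliqueFree (m + 2))
    (hn : ∀ S, (G.induce S).CliqueFree (m + 1) → (G.induce S).Colorable n) :
    (G.induce Y).Colorable (q * (2 ^ m * n)) := by
  obtain ⟨c⟩ := hX
  let T (i : Fin q) : Set V := {x | ∃ hx : x ∈ X, c ⟨x, hx⟩ = i}
  have hTX (i : Fin q) : T i ⊆ X := fun x hx => hx.1
  have hT (i : Fin q) : G.IsIndepSet (T i) := fun x ⟨hx, hcx⟩ x' ⟨hx', hcx'⟩ _ hadj =>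
    c.valid (v := ⟨x, hx⟩) (w := ⟨x', hx'⟩) hadj (hcx.trans hcx'.symm)
  rw [← Fintype.card_fin q]
  refine colorable_induce_of_subset_iUnion (T := fun i => {y | y ∈ Y ∧ ∃ x ∈ T i, G.Adj x y})
    (fun y hy => ?_) fun i => (h.restrict (hTX i)).colorable_of_isIndepSet hG (hT i) hclq hn
  obtain ⟨x, hx, hxy⟩ := h.exists_adj y hy
  exact Set.mem_iUnion.2 ⟨c ⟨x, hx⟩, hy, x, ⟨hx, rfl⟩, hxy⟩

end Attachment

end Attachment

section Levelling

variable {G : SimpleGraph V} {L : ℕ → Set V} {K T : Set V} {s : ℕ → V} {i j k l t : ℕ}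
  {a b c d u v x y : V}

theorem mem_lowerLevels : x ∈ lowerLevels L k ↔ ∃ j < k, x ∈ L j := by
  simp [lowerLevels]

theorem mem_lowerLevels_of_mem (hx : x ∈ L i) (hi : i < k) : x ∈ lowerLevels L k :=
  mem_lowerLevels.2 ⟨i, hi, hx⟩

theorem lowerLevels_mono (h : i ≤ k) : lowerLevels L i ⊆ lowerLevels L k := fun _ hx =>
  let ⟨_, hj, hxj⟩ := mem_lowerLevels.1 hx
  mem_lowerLevels_of_mem hxj (hj.trans_le h)

theorem insert_lowerLevels_subset (hx : x ∈ L i) (hi : i < k) :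
    insert x (lowerLevels L i) ⊆ lowerLevels L k :=
  Set.insert_subset (mem_lowerLevels_of_mem hx hi) (lowerLevels_mono hi.le)

namespace IsLevelling

theorem eq_of_mem (h : IsLevelling G k L) (hi : i ≤ k) (hj : j ≤ k) (hui : u ∈ L i)
    (huj : u ∈ L j) : i = j := by
  by_contra hij
  exact Set.disjoint_left.1 (h.1 i j hi hj hij) hui huj

theorem subsingleton_zero (h : IsLevelling G k L) : (L 0).Subsingleton := by
  obtain ⟨x, hx⟩ := h.2.1
  simp [hx]

theorem exists_parent (h : IsLevelling G k L) (hi : i < k) (hu : u ∈ L (i + 1)) :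
    ∃ w ∈ L i, G.Adj w u :=
  (h.2.2 (i + 1) (by omega) hi u hu).1

theorem ne_of_mem_succ (h : IsLevelling G k L) (hi : i < k) (hu : u ∈ L (i + 1)) (hx : x ∈ L i) :
    u ≠ x := by
  rintro rfl
  have := h.eq_of_mem hi (by omega) hu hx
  omega

theorem ne_and_not_adj (h : IsLevelling G k L) (hi : i < k) (hu : u ∈ L (i + 1)) :
    ∀ p ∈ lowerLevels L i, u ≠ p ∧ ¬ G.Adj u p := by
  intro p hp
  obtain ⟨j, hj, hpj⟩ := mem_lowerLevels.1 hp
  refine ⟨?_, fun hup => (h.2.2 (i + 1) (by omega) hi u hu).2 j (by omega) p hpj hup.symm⟩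
  rintro rfl
  have := h.eq_of_mem hi (by omega) hu hpj
  omega

theorem exists_walk_to_root (h : IsLevelling G k L) (hr : x ∈ L 0) (hi : i ≤ k) (hu : u ∈ L i) :
    ∃ p : G.Walk u x, ∀ y ∈ p.support, y = u ∨ y ∈ lowerLevels L i := by
  induction i generalizing u with
  | zero =>
    obtain rfl := h.subsingleton_zero hu hr
    exact ⟨Walk.nil, by simp⟩
  | succ i ih =>
    obtain ⟨w, hw, hwu⟩ := h.exists_parent hi hu
    obtain ⟨p, hp⟩ := ih (by omega) hw
    refine ⟨Walk.cons hwu.symm p, fun y hy => ?_⟩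
    rw [Walk.support_cons, List.mem_cons] at hy
    exact hy.imp_right fun hy => insert_lowerLevels_subset hw i.lt_succ_self (hp y hy)

theorem exists_hasInducedPath (h : IsLevelling G k L) (hi : i ≤ k) (hu : u ∈ L i)
    (hv : v ∈ L i) : ∃ l, HasInducedPath G (lowerLevels L i) l u v := by
  obtain ⟨x, hx⟩ := h.2.1
  have hr : x ∈ L 0 := by simp [hx]
  obtain ⟨p, hp⟩ := h.exists_walk_to_root hr hi hu
  obtain ⟨q, hq⟩ := h.exists_walk_to_root hr hi hv
  obtain ⟨r, hr, hrs⟩ := exists_isInducedPath (p.append q.reverse)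
  refine ⟨r.length, r, hr, fun y hy hyu hyv => ?_, rfl⟩
  have hy' := hrs hy
  rw [Walk.mem_support_append_iff, Walk.support_reverse, List.mem_reverse] at hy'
  exact hy'.elim (fun hy => (hp y hy).resolve_left hyu) fun hy => (hq y hy).resolve_left hyv

end IsLevelling

/-- The graph of odd connections through the levels below `i`: its adjacency is `OddConn G L i`. -/
abbrev oddBelow (G : SimpleGraph V) (L : ℕ → Set V) (i : ℕ) : SimpleGraph V :=
  oddGraph G (lowerLevels L i)

theorem oddBelow_adj_of_adj (h : G.Adj u v) : (oddBelow G L i).Adj u v :=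
  ⟨h.ne, 1, odd_one, .of_adj h⟩

/-- A levelling `L 0, …, L (t + 1)` of a graph without odd holes with a spine: a path `s 0, …, s t`
through the levels in which each vertex is the only parent of the next one. Moreover, all induced
paths joining two given nonadjacent vertices of a level through the levels up to theirs (strictly
below, for the last level) have the same parity of length. -/
structure SpinedLevelling (G : SimpleGraph V) (t : ℕ) (L : ℕ → Set V) (s : ℕ → V) : Prop where
  not_hasOddHole : ¬ HasOddHole G
  isLevelling : IsLevelling G (t + 1) L
  spine_zero_mem : s 0 ∈ L 0
  isDependent : ∀ {i}, i < t → IsDependent G L i (s i) (s (i + 1))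
  parity : ∀ {i k u v l m}, i ≤ k ∧ k ≤ min (i + 1) (t + 1) → u ∈ L i → v ∈ L i → u ≠ v →
    ¬ G.Adj u v → HasInducedPath G (lowerLevels L k) l u v →
    HasInducedPath G (lowerLevels L k) m u v → Even (l + m)

namespace SpinedLevelling

theorem spine_mem (h : SpinedLevelling G t L s) (hi : i ≤ t) : s i ∈ L i := by
  obtain _ | i := i
  · exact h.spine_zero_mem
  · exact (h.isDependent hi).1

theorem odd_iff (h : SpinedLevelling G t L s) (hk : i ≤ k ∧ k ≤ min (i + 1) (t + 1))
    (hu : u ∈ L i) (hv : v ∈ L i) (huv : u ≠ v) (hnuv : ¬ G.Adj u v)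
    (hl : HasInducedPath G (lowerLevels L k) l u v) : (oddBelow G L i).Adj u v ↔ Odd l :=
  oddGraph_adj_iff_of_even_add huv (h.isLevelling.exists_hasInducedPath (by omega) hu hv)
    fun _ hm => h.parity hk hu hv huv hnuv (hm.mono (lowerLevels_mono hk.1)) hl

theorem not_odd_of_common (h : SpinedLevelling G t L s)
    (hk : i ≤ k ∧ k ≤ min (i + 1) (t + 1)) (hu : u ∈ L i) (hv : v ∈ L i) (hnuv : ¬ G.Adj u v)
    (hx : x ∈ lowerLevels L k) (hxu : G.Adj x u) (hxv : G.Adj x v) :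
    ¬ (oddBelow G L i).Adj u v := fun huv =>
  absurd ((h.odd_iff hk hu hv huv.ne hnuv (.two hxu.symm hxv huv.ne hnuv hx)).1 huv) (by decide)

theorem not_odd_of_common_parent (h : SpinedLevelling G t L s) (hj : j ≤ t) (hu : u ∈ L (j + 1))
    (hv : v ∈ L (j + 1)) (hnuv : ¬ G.Adj u v) (hx : x ∈ L j) (hxu : G.Adj x u)
    (hxv : G.Adj x v) : ¬ (oddBelow G L (j + 1)).Adj u v :=
  h.not_odd_of_common (k := j + 1) (by omega) hu hv hnuv (mem_lowerLevels_of_mem hx (by omega))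
    hxu hxv

theorem exists_hasInducedPath_odd_iff (h : SpinedLevelling G t L s) (hi : i ≤ t + 1)
    (hu : u ∈ L i) (hv : v ∈ L i) (huv : u ≠ v) :
    ∃ l, HasInducedPath G (lowerLevels L i) l u v ∧ ((oddBelow G L i).Adj u v ↔ Odd l) := by
  by_cases hadj : G.Adj u v
  · exact ⟨1, .of_adj hadj, by simp [oddBelow_adj_of_adj hadj]⟩
  · obtain ⟨l, hl⟩ := h.isLevelling.exists_hasInducedPath hi hu hv
    exact ⟨l, hl, h.odd_iff (by omega) hu hv huv hadj hl⟩

theorem exists_hasInducedPath_of_parents (h : SpinedLevelling G t L s) (hj : j ≤ t)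
    (hu : u ∈ L (j + 1)) (hv : v ∈ L (j + 1)) (hnuv : ¬ G.Adj u v) (hx : x ∈ L j) (hy : y ∈ L j)
    (hxu : G.Adj x u) (hyv : G.Adj y v) (hxv : ¬ G.Adj x v) (hyu : ¬ G.Adj y u) :
    ∃ l, HasInducedPath G (insert x (insert y (lowerLevels L j))) (l + 2) u v ∧
      ((oddBelow G L j).Adj x y ↔ Odd l) := by
  have hxy : x ≠ y := by
    rintro rfl
    exact hxv hyv
  have huv : u ≠ v := by
    rintro rfl
    exact hyu hyv
  have hne {p q : V} (hp : p ∈ L (j + 1)) (hq : q ∈ L j) : p ≠ q :=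
    h.isLevelling.ne_of_mem_succ (by omega) hp hq
  have hfar {p : V} (hp : p ∈ L (j + 1)) := h.isLevelling.ne_and_not_adj (by omega) hp
  obtain ⟨l, hl, hodd⟩ := h.exists_hasInducedPath_odd_iff (by omega) hx hy hxy
  have hl' : HasInducedPath G (insert x (lowerLevels L j)) (l + 1) u y :=
    hl.cons (Set.subset_insert _ _) (Set.mem_insert _ _) hxu.symm (hne hu hy)
      (fun huy => hyu huy.symm) (hfar hu)
  refine ⟨l, (hl'.symm.cons (Set.insert_subset_insert (Set.subset_insert _ _)) (by simp)
    hyv.symm huv.symm (fun hvu => hnuv hvu.symm) ?_).symm, hodd⟩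
  rintro p (rfl | hp)
  · exact ⟨hne hv hx, fun hvx => hxv hvx.symm⟩
  · exact hfar hv p hp

theorem odd_iff_odd_parents (h : SpinedLevelling G t L s) (hj : j ≤ t) (hu : u ∈ L (j + 1))
    (hv : v ∈ L (j + 1)) (hnuv : ¬ G.Adj u v) (hx : x ∈ L j) (hy : y ∈ L j) (hxu : G.Adj x u)
    (hyv : G.Adj y v) (hxv : ¬ G.Adj x v) (hyu : ¬ G.Adj y u) :
    (oddBelow G L (j + 1)).Adj u v ↔ (oddBelow G L j).Adj x y := by
  obtain ⟨l, hl, hodd⟩ := h.exists_hasInducedPath_of_parents hj hu hv hnuv hx hy hxu hyv hxv hyu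
  have huv : u ≠ v := by
    rintro rfl
    exact hyu hyv
  have hsub : insert x (insert y (lowerLevels L j)) ⊆ lowerLevels L (j + 1) :=
    Set.insert_subset (mem_lowerLevels_of_mem hx j.lt_succ_self)
      (insert_lowerLevels_subset hy j.lt_succ_self)
  rw [h.odd_iff (by omega) hu hv huv hnuv (hl.mono hsub), hodd]
  simp [parity_simps]

theorem odd_parents_of_odd (h : SpinedLevelling G t L s) (hj : j ≤ t) (hu : u ∈ L (j + 1))
    (hv : v ∈ L (j + 1)) (hnuv : ¬ G.Adj u v) (huv : (oddBelow G L (j + 1)).Adj u v)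
    (hx : x ∈ L j) (hy : y ∈ L j) (hxu : G.Adj x u) (hyv : G.Adj y v) :
    (oddBelow G L j).Adj x y := by
  refine (h.odd_iff_odd_parents hj hu hv hnuv hx hy hxu hyv (fun hxv => ?_) fun hyu => ?_).1 huv
  · exact h.not_odd_of_common_parent hj hu hv hnuv hx hxu hxv huv
  · exact h.not_odd_of_common_parent hj hu hv hnuv hy hyu hyv huv

theorem adj_of_common_child (h : SpinedLevelling G t L s) (hj : j ≤ t) (hu : u ∈ L (j + 1))
    (hxu : G.Adj x u) (hyu : G.Adj y u) (hxy : (oddBelow G L j).Adj x y) : G.Adj x y := by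
  by_contra hnxy
  obtain ⟨hne, l, hl, hP⟩ := hxy
  have hQ : HasInducedPath G {u} 2 x y := .two hxu hyu.symm hne hnxy rfl
  have heven := hP.even_add hQ h.not_hasOddHole hne hnxy fun p hp _ _ => by
    rintro q rfl
    have hfar := h.isLevelling.ne_and_not_adj (by omega) hu p hp
    exact ⟨hfar.1.symm, fun hpq => hfar.2 hpq.symm⟩
  rw [Nat.even_add] at heven
  exact Nat.not_even_iff_odd.2 hl (heven.2 (by decide))

theorem odd_of_path_of_common_parent (h : SpinedLevelling G t L s) (hj : j ≤ t)
    (ha : a ∈ L (j + 1)) (hb : b ∈ L (j + 1)) (hc : c ∈ L (j + 1)) (hd : d ∈ L (j + 1))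
    (hnab : ¬ G.Adj a b) (hnbc : ¬ G.Adj b c) (hncd : ¬ G.Adj c d)
    (hab : (oddBelow G L (j + 1)).Adj a b) (hbc : (oddBelow G L (j + 1)).Adj b c)
    (hcd : (oddBelow G L (j + 1)).Adj c d) (hac : ¬ (oddBelow G L (j + 1)).Adj a c)
    (hbd : ¬ (oddBelow G L (j + 1)).Adj b d) (hx : x ∈ L j) (hxa : G.Adj x a)
    (hxd : G.Adj x d) : (oddBelow G L (j + 1)).Adj a d := by
  have not_common {p q z : V} (hp : p ∈ L (j + 1)) (hq : q ∈ L (j + 1)) (hnpq : ¬ G.Adj p q)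
      (hpq : (oddBelow G L (j + 1)).Adj p q) (hz : z ∈ L j) (hzp : G.Adj z p) : ¬ G.Adj z q :=
    fun hzq => h.not_odd_of_common_parent hj hp hq hnpq hz hzp hzq hpq
  by_contra had
  obtain ⟨y, hy, hyb⟩ := h.isLevelling.exists_parent (by omega) hb
  obtain ⟨z, hz, hzc⟩ := h.isLevelling.exists_parent (by omega) hc
  have hxb := not_common ha hb hnab hab hx hxa
  have hxc := not_common hd hc (fun hh => hncd hh.symm) hcd.symm hx hxd
  have hxy := h.odd_parents_of_odd hj ha hb hnab hab hx hy hxa hyb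
  have hzx := h.odd_parents_of_odd hj hc hd hncd hcd hz hx hzc hxd
  have hyd : G.Adj y d := by
    by_contra hyd
    exact hbd <| (h.odd_iff_odd_parents hj hb hd (fun hh => hbd (oddBelow_adj_of_adj hh)) hy hx
      hyb hxd hyd hxb).2 hxy.symm
  have hza : G.Adj z a := by
    by_contra hza
    exact hac <| (h.odd_iff_odd_parents hj ha hc (fun hh => hac (oddBelow_adj_of_adj hh)) hx hz
      hxa hzc hxc hza).2 hzx.symm
  have hadj_xy : G.Adj x y := h.adj_of_common_child hj hd hxd hyd hxy
  have hadj_zx : G.Adj z x := h.adj_of_common_child hj ha hza hxa hzx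
  have hya := not_common hb ha (fun hh => hnab hh.symm) hab.symm hy hyb
  have hzd := not_common hc hd hncd hcd hz hzc
  have hyc := not_common hb hc hnbc hbc hy hyb
  have hzb := not_common hc hb (fun hh => hnbc hh.symm) hbc.symm hz hzc
  by_cases hzy : G.Adj z y
  · exact had <| (h.odd_iff_odd_parents hj ha hd (fun hh => had (oddBelow_adj_of_adj hh)) hz hy
      hza hyd hzd hya).2 (oddBelow_adj_of_adj hzy)
  · have hlow {p : V} (hp : p ∈ L j) : p ∈ lowerLevels L (j + 1) :=
      mem_lowerLevels_of_mem hp j.lt_succ_self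
    have hP : HasInducedPath G (lowerLevels L (j + 1)) 4 b c :=
      .four hyb.symm hadj_xy.symm hadj_zx.symm hzc hbc.ne hnbc (fun hh => hxb hh.symm)
        (fun hh => hzb hh.symm) (fun hh => hzy hh.symm) hyc hxc (hlow hy) (hlow hx) (hlow hz)
    exact absurd ((h.odd_iff (by omega) hb hc hbc.ne hnbc hP).1 hbc) (by decide)

theorem exists_parents_not_odd (h : SpinedLevelling G t L s) (hj : j ≤ t) (hK : K ⊆ L j)
    (hu : u ∈ L (j + 1)) (hv : v ∈ L (j + 1)) (huv : ¬ (oddBelow G L (j + 1)).Adj u v)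
    (hKu : ∃ x ∈ K, G.Adj x u) (hKv : ∃ x ∈ K, G.Adj x v) :
    ∃ x ∈ K, ∃ y ∈ K, G.Adj x u ∧ G.Adj y v ∧ ¬ (oddBelow G L j).Adj x y := by
  obtain ⟨x, hx, hxu⟩ := hKu
  obtain ⟨y, hy, hyv⟩ := hKv
  by_cases hxv : G.Adj x v
  · exact ⟨x, hx, x, hx, hxu, hxv, SimpleGraph.irrefl _⟩
  by_cases hyu : G.Adj y u
  · exact ⟨y, hy, y, hy, hyu, hyv, SimpleGraph.irrefl _⟩
  refine ⟨x, hx, y, hy, hxu, hyv, fun hxy => huv ?_⟩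
  exact (h.odd_iff_odd_parents hj hu hv (fun hh => huv (oddBelow_adj_of_adj hh)) (hK hx) (hK hy)
    hxu hyv hxv hyu).2 hxy

theorem odd_of_path (h : SpinedLevelling G t L s) (hj : j ≤ t) (hK : K ⊆ L j)
    (hcog : IsCograph ((oddBelow G L j).induce K))
    (ha : a ∈ L (j + 1)) (hb : b ∈ L (j + 1)) (hc : c ∈ L (j + 1)) (hd : d ∈ L (j + 1))
    (hKa : ∃ x ∈ K, G.Adj x a) (hKb : ∃ x ∈ K, G.Adj x b) (hKc : ∃ x ∈ K, G.Adj x c)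
    (hKd : ∃ x ∈ K, G.Adj x d) (hnab : ¬ G.Adj a b) (hnbc : ¬ G.Adj b c) (hncd : ¬ G.Adj c d)
    (hab : (oddBelow G L (j + 1)).Adj a b) (hbc : (oddBelow G L (j + 1)).Adj b c)
    (hcd : (oddBelow G L (j + 1)).Adj c d) (hac : ¬ (oddBelow G L (j + 1)).Adj a c)
    (hbd : ¬ (oddBelow G L (j + 1)).Adj b d) : (oddBelow G L (j + 1)).Adj a d := by
  obtain ⟨xa, hxa, xc, hxc, hxaa, hxcc, hxac⟩ := h.exists_parents_not_odd hj hK ha hc hac hKa hKc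
  obtain ⟨xb, hxb, xd, hxd, hxbb, hxdd, hxbd⟩ := h.exists_parents_not_odd hj hK hb hd hbd hKb hKd
  have common {z : V} (hz : z ∈ L j) (hza : G.Adj z a) (hzd : G.Adj z d) :=
    h.odd_of_path_of_common_parent hj ha hb hc hd hnab hnbc hncd hab hbc hcd hac hbd hz hza hzd
  by_cases hxad : G.Adj xa d
  · exact common (hK hxa) hxaa hxad
  by_cases hxda : G.Adj xd a
  · exact common (hK hxd) hxda hxdd
  by_contra had
  refine had ((h.odd_iff_odd_parents hj ha hd (fun hh => had (oddBelow_adj_of_adj hh)) (hK hxa)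
    (hK hxd) hxaa hxdd hxad hxda).2 ?_)
  exact isCograph_iff.1 hcog ⟨xa, hxa⟩ ⟨xb, hxb⟩ ⟨xc, hxc⟩ ⟨xd, hxd⟩
    (h.odd_parents_of_odd hj ha hb hnab hab (hK hxa) (hK hxb) hxaa hxbb)
    (h.odd_parents_of_odd hj hb hc hnbc hbc (hK hxb) (hK hxc) hxbb hxcc)
    (h.odd_parents_of_odd hj hc hd hncd hcd (hK hxc) (hK hxd) hxcc hxdd) hxac hxbd

theorem isCograph_induce_of_parents (h : SpinedLevelling G t L s) (hj : j ≤ t) (hK : K ⊆ L j)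
    (hcog : IsCograph ((oddBelow G L j).induce K))
    (hT : T ⊆ {u | u ∈ L (j + 1) ∧ ∃ x ∈ K, G.Adj x u}) (hind : G.IsIndepSet T) :
    IsCograph ((oddBelow G L (j + 1)).induce T) := by
  have not_adj {p q : T} (hpq : ((oddBelow G L (j + 1)).induce T).Adj p q) : ¬ G.Adj p q :=
    hind p.2 q.2 fun hh => hpq.ne (Subtype.ext hh)
  rw [isCograph_iff]
  exact fun a b c d hab hbc hcd => h.odd_of_path hj hK hcog (hT a.2).1 (hT b.2).1 (hT c.2).1
    (hT d.2).1 (hT a.2).2 (hT b.2).2 (hT c.2).2 (hT d.2).2 (not_adj hab) (not_adj hbc)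
    (not_adj hcd) hab hbc hcd

end SpinedLevelling

end Levelling

section SpineClass

variable {G : SimpleGraph V} {L K : ℕ → Set V} {C : Set V} {s z : ℕ → V} {δ : Prop} {i j m n t : ℕ}
  {a b c d u v x : V}

/-- A family of subsets `K i` of the levels on which the graphs `oddBelow G L i` are cographs. The
vertices of `K (j + 1)` adjacent to `z j` are the ones attached to the spine, the others have a
parent in `K j`, and `δ` says whether attached and unattached vertices are joined by odd paths. -/
structure SpineClass (G : SimpleGraph V) (t : ℕ) (L K : ℕ → Set V) (z : ℕ → V) (δ : Prop) :
    Prop where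
  subset : ∀ {i}, i ≤ t → K i ⊆ L i
  apex_mem : ∀ {j}, j < t → z j ∈ lowerLevels L (j + 2)
  exists_parent : ∀ {j u}, j < t → u ∈ K (j + 1) → ¬ G.Adj (z j) u → ∃ w ∈ K j, G.Adj w u
  not_adj : ∀ {j u v}, j < t → u ∈ K (j + 1) → v ∈ K (j + 1) → G.Adj (z j) u →
    ¬ G.Adj (z j) v → ¬ G.Adj u v
  odd_iff : ∀ {j u v}, j < t → u ∈ K (j + 1) → v ∈ K (j + 1) → G.Adj (z j) u →
    ¬ G.Adj (z j) v → ((oddBelow G L (j + 1)).Adj u v ↔ δ)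
  adj_of_adj : ∀ {j u v w}, j < t → u ∈ K (j + 1) → v ∈ K (j + 1) → ¬ G.Adj (z j) u →
    ¬ G.Adj (z j) v → G.Adj u v → w ∈ L j → G.Adj w u → G.Adj w v

theorem SpinedLevelling.odd_iff_of_same_parents (h : SpinedLevelling G t L s) (hj : j ≤ t)
    (hu : u ∈ L (j + 1)) (hv : v ∈ L (j + 1)) (hx : x ∈ L (j + 1)) (hux : ¬ G.Adj u x)
    (hvx : ¬ G.Adj v x) (huv : ∀ w ∈ L j, G.Adj w u ↔ G.Adj w v) :
    (oddBelow G L (j + 1)).Adj u x ↔ (oddBelow G L (j + 1)).Adj v x := by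
  obtain ⟨w, hw, hwu⟩ := h.isLevelling.exists_parent (by omega) hu
  obtain ⟨y, hy, hyx⟩ := h.isLevelling.exists_parent (by omega) hx
  have hwv := (huv w hw).1 hwu
  by_cases hwx : G.Adj w x
  · exact iff_of_false (h.not_odd_of_common_parent hj hu hx hux hw hwu hwx)
      (h.not_odd_of_common_parent hj hv hx hvx hw hwv hwx)
  by_cases hyu : G.Adj y u
  · exact iff_of_false (h.not_odd_of_common_parent hj hu hx hux hy hyu hyx)
      (h.not_odd_of_common_parent hj hv hx hvx hy ((huv y hy).1 hyu) hyx)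
  rw [h.odd_iff_odd_parents hj hu hx hux hw hy hwu hyx hwx hyu,
    h.odd_iff_odd_parents hj hv hx hvx hw hy hwv hyx hwx fun hyv => hyu ((huv y hy).2 hyv)]

namespace SpineClass

theorem not_odd_of_attached (hK : SpineClass G t L K z δ) (h : SpinedLevelling G t L s)
    (hj : j < t) (hu : u ∈ K (j + 1)) (hv : v ∈ K (j + 1)) (hzu : G.Adj (z j) u)
    (hzv : G.Adj (z j) v) (huv : ¬ G.Adj u v) : ¬ (oddBelow G L (j + 1)).Adj u v :=
  h.not_odd_of_common (k := j + 2) (by omega) (hK.subset hj hu) (hK.subset hj hv) huv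
    (hK.apex_mem hj) hzu hzv

theorem odd_iff_of_adj (hK : SpineClass G t L K z δ) (h : SpinedLevelling G t L s) (hj : j < t)
    (hu : u ∈ K (j + 1)) (hv : v ∈ K (j + 1)) (hx : x ∈ K (j + 1)) (huv : G.Adj u v)
    (hux : ¬ G.Adj u x) (hvx : ¬ G.Adj v x) :
    (oddBelow G L (j + 1)).Adj u x ↔ (oddBelow G L (j + 1)).Adj v x := by
  by_cases hzu : G.Adj (z j) u
  · have hzv : G.Adj (z j) v := not_not.1 fun hzv => hK.not_adj hj hu hv hzu hzv huv
    by_cases hzx : G.Adj (z j) x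
    · exact iff_of_false (hK.not_odd_of_attached h hj hu hx hzu hzx hux)
        (hK.not_odd_of_attached h hj hv hx hzv hzx hvx)
    · rw [hK.odd_iff hj hu hx hzu hzx, hK.odd_iff hj hv hx hzv hzx]
  · have hzv : ¬ G.Adj (z j) v := fun hzv => hK.not_adj hj hv hu hzv hzu huv.symm
    by_cases hzx : G.Adj (z j) x
    · rw [SimpleGraph.adj_comm, hK.odd_iff hj hx hu hzx hzu, SimpleGraph.adj_comm,
        hK.odd_iff hj hx hv hzx hzv]
    · exact h.odd_iff_of_same_parents hj.le (hK.subset hj hu) (hK.subset hj hv) (hK.subset hj hx)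
        hux hvx fun w hw => ⟨hK.adj_of_adj hj hu hv hzu hzv huv hw,
          hK.adj_of_adj hj hv hu hzv hzu huv.symm hw⟩

theorem not_adj_of_path (hK : SpineClass G t L K z δ) (h : SpinedLevelling G t L s) (hj : j < t)
    (ha : a ∈ K (j + 1)) (hb : b ∈ K (j + 1)) (hc : c ∈ K (j + 1)) (hd : d ∈ K (j + 1))
    (hab : (oddBelow G L (j + 1)).Adj a b) (hbc : (oddBelow G L (j + 1)).Adj b c)
    (hcd : (oddBelow G L (j + 1)).Adj c d) (hac : ¬ (oddBelow G L (j + 1)).Adj a c)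
    (hbd : ¬ (oddBelow G L (j + 1)).Adj b d) (had : ¬ (oddBelow G L (j + 1)).Adj a d) :
    ¬ G.Adj a b ∧ ¬ G.Adj b c ∧ ¬ G.Adj c d := by
  have hnac : ¬ G.Adj a c := fun hh => hac (oddBelow_adj_of_adj hh)
  have hnbd : ¬ G.Adj b d := fun hh => hbd (oddBelow_adj_of_adj hh)
  have hnad : ¬ G.Adj a d := fun hh => had (oddBelow_adj_of_adj hh)
  have hnbc : ¬ G.Adj b c := by
    intro hadj
    by_cases hnab : G.Adj a b
    · by_cases hncd : G.Adj c d
      · have hne : a ≠ d := by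
          rintro rfl
          exact hnac hncd.symm
        have hlow {p : V} (hp : p ∈ K (j + 1)) : p ∈ lowerLevels L (j + 2) :=
          mem_lowerLevels_of_mem (hK.subset hj hp) (by omega)
        have hP : HasInducedPath G (lowerLevels L (j + 2)) 3 a d :=
          .three hnab hadj hncd hne hnad hnac hnbd (hlow hb) (hlow hc)
        exact had ((h.odd_iff (k := j + 2) (by omega) (hK.subset hj ha) (hK.subset hj hd) hne
          hnad hP).2 (by decide))
      · exact hbd ((hK.odd_iff_of_adj h hj hb hc hd hadj hnbd hncd).2 hcd)
    · exact hac ((hK.odd_iff_of_adj h hj hb hc ha hadj (fun hh => hnab hh.symm)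
        fun hh => hnac hh.symm).1 hab.symm).symm
  exact ⟨fun hh => hac ((hK.odd_iff_of_adj h hj ha hb hc hh hnac hnbc).2 hbc), hnbc, fun hh =>
    hbd ((hK.odd_iff_of_adj h hj hc hd hb hh (fun hh => hnbc hh.symm) fun hh =>
      hnbd hh.symm).1 hbc.symm).symm⟩

theorem not_attached_of_path (hK : SpineClass G t L K z δ) (h : SpinedLevelling G t L s)
    (hj : j < t) (ha : a ∈ K (j + 1)) (hb : b ∈ K (j + 1)) (hc : c ∈ K (j + 1))
    (hd : d ∈ K (j + 1)) (hnab : ¬ G.Adj a b) (hnbc : ¬ G.Adj b c) (hncd : ¬ G.Adj c d)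
    (hab : (oddBelow G L (j + 1)).Adj a b) (hbc : (oddBelow G L (j + 1)).Adj b c)
    (hcd : (oddBelow G L (j + 1)).Adj c d) (hac : ¬ (oddBelow G L (j + 1)).Adj a c)
    (hbd : ¬ (oddBelow G L (j + 1)).Adj b d) (had : ¬ (oddBelow G L (j + 1)).Adj a d) :
    ¬ G.Adj (z j) a ∧ ¬ G.Adj (z j) b ∧ ¬ G.Adj (z j) c ∧ ¬ G.Adj (z j) d := by
  have attached_iff {p q : V} (hp : p ∈ K (j + 1)) (hq : q ∈ K (j + 1))
      (hpq : ¬ ((oddBelow G L (j + 1)).Adj p q ↔ δ)) : G.Adj (z j) p ↔ G.Adj (z j) q := by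
    by_contra hz
    by_cases hzp : G.Adj (z j) p
    · exact hpq (hK.odd_iff hj hp hq hzp fun hzq => hz (iff_of_true hzp hzq))
    · rw [SimpleGraph.adj_comm] at hpq
      exact hpq (hK.odd_iff hj hq hp (not_not.1 fun hzq => hz (iff_of_false hzp hzq)) hzp)
  have not_both {p q : V} (hp : p ∈ K (j + 1)) (hq : q ∈ K (j + 1)) (hnpq : ¬ G.Adj p q)
      (hpq : (oddBelow G L (j + 1)).Adj p q) (hz : G.Adj (z j) p ↔ G.Adj (z j) q) :
      ¬ G.Adj (z j) p := fun hzp =>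
    hK.not_odd_of_attached h hj hp hq hzp (hz.1 hzp) hnpq hpq
  by_cases hδ : δ
  · have hzac := attached_iff ha hc fun hh => hac (hh.2 hδ)
    have hzbd := attached_iff hb hd fun hh => hbd (hh.2 hδ)
    have hzad := attached_iff ha hd fun hh => had (hh.2 hδ)
    have hza := not_both ha hb hnab hab (hzad.trans hzbd.symm)
    have hzd := fun hz => hza (hzad.2 hz)
    exact ⟨hza, fun hz => hzd (hzbd.1 hz), fun hz => hza (hzac.2 hz), hzd⟩
  · have hzab := attached_iff ha hb fun hh => hδ (hh.1 hab)
    have hzbc := attached_iff hb hc fun hh => hδ (hh.1 hbc)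
    have hzcd := attached_iff hc hd fun hh => hδ (hh.1 hcd)
    exact ⟨not_both ha hb hnab hab hzab, not_both hb hc hnbc hbc hzbc,
      not_both hc hd hncd hcd hzcd, fun hz => not_both hc hd hncd hcd hzcd (hzcd.2 hz)⟩

theorem isCograph (hK : SpineClass G t L K z δ) (h : SpinedLevelling G t L s) (hi : i ≤ t) :
    IsCograph ((oddBelow G L i).induce (K i)) := by
  rw [isCograph_iff]
  induction i with
  | zero =>
    rintro ⟨a, ha⟩ ⟨b, hb⟩ - - hab
    exact absurd (h.isLevelling.subsingleton_zero (hK.subset hi ha) (hK.subset hi hb)) hab.1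
  | succ j ih =>
    rintro ⟨a, ha⟩ ⟨b, hb⟩ ⟨c, hc⟩ ⟨d, hd⟩ hab hbc hcd hac hbd
    by_contra had
    obtain ⟨hnab, hnbc, hncd⟩ := hK.not_adj_of_path h hi ha hb hc hd hab hbc hcd hac hbd had
    obtain ⟨hza, hzb, hzc, hzd⟩ :=
      hK.not_attached_of_path h hi ha hb hc hd hnab hnbc hncd hab hbc hcd hac hbd had
    exact had <| h.odd_of_path (by omega) (hK.subset (by omega))
      (isCograph_iff.2 (ih (by omega))) (hK.subset hi ha) (hK.subset hi hb) (hK.subset hi hc)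
      (hK.subset hi hd) (hK.exists_parent hi ha hza) (hK.exists_parent hi hb hzb)
      (hK.exists_parent hi hc hzc) (hK.exists_parent hi hd hzd)
      hnab hnbc hncd hab hbc hcd hac hbd

theorem cliqueFree_induce (hK : SpineClass G t L K z δ) (h : SpinedLevelling G t L s) (hi : i ≤ t)
    (hG : G.CliqueFree (m + 3)) : (G.induce (K i)).CliqueFree (m + 2) := by
  obtain _ | j := i
  · have hsub : (K 0).Subsingleton := h.isLevelling.subsingleton_zero.anti (hK.subset hi)
    have : Subsingleton (K 0) := hsub.coe_sort
    have hstable : (G.induce (K 0)).CliqueFree 2 := by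
      rw [cliqueFree_two]
      exact Subsingleton.elim _ _
    exact hstable.mono (by omega)
  refine cliqueFree_induce_of_common_neighbor hG fun q hq hclq ⟨u, hu⟩ => ?_
  by_cases hzu : G.Adj (z j) u
  · refine ⟨z j, fun v hv => ?_⟩
    by_contra hzv
    have huv : u ≠ v := by
      rintro rfl
      exact hzv hzu
    exact hK.not_adj hi (hq hu) (hq hv) hzu hzv (hclq hu hv huv)
  · obtain ⟨w, hw, hwu⟩ := hK.exists_parent hi (hq hu) hzu
    refine ⟨w, fun v hv => ?_⟩
    obtain rfl | huv := eq_or_ne u v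
    · exact hwu
    have hadj := hclq hu hv huv
    have hzv : ¬ G.Adj (z j) v := fun hzv => hK.not_adj hi (hq hv) (hq hu) hzv hzu hadj.symm
    exact hK.adj_of_adj hi (hq hu) (hq hv) hzu hzv hadj (hK.subset (by omega) hw) hwu

theorem colorable_induce (hK : SpineClass G t L K z δ) (h : SpinedLevelling G t L s) (hi : i ≤ t)
    (hG : G.CliqueFree (m + 3)) : (G.induce (K i)).Colorable (2 ^ m) := by
  have hrep : ParityRep (G.induce (K i)) (fun x => {x}) ((oddBelow G L i).induce (K i)) := by
    refine ⟨hK.isCograph h hi, fun _ => Set.singleton_nonempty _, ?_, ?_⟩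
    · rintro y z hyz _ rfl _ rfl
      exact oddBelow_adj_of_adj hyz
    · rintro _ b c hab hbc - hac a rfl
      exact ⟨c, rfl, h.not_odd_of_common (k := i + 1) (by omega) (hK.subset hi a.2)
        (hK.subset hi c.2) hac (mem_lowerLevels_of_mem (hK.subset hi b.2) i.lt_succ_self)
        hab.symm hbc⟩
  exact hrep.colorable (hK.cliqueFree_induce h hi hG)

theorem colorable_grandchildren (hK : SpineClass G t L K z δ) (h : SpinedLevelling G t L s)
    (hG : G.CliqueFree (m + 3))
    (hn : ∀ S, (G.induce S).CliqueFree (m + 2) → (G.induce S).Colorable n)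
    (hC : ∀ d ∈ lowerLevels L (t + 1), ∀ y ∈ C, d ≠ y ∧ ¬ G.Adj d y) :
    (G.induce {y | y ∈ C ∧ ∃ a, (a ∈ L (t + 1) ∧ ∃ x ∈ K t, G.Adj x a) ∧ G.Adj a y}).Colorable
      (2 ^ m * (2 ^ (m + 1) * n) * (2 ^ (m + 1) * n)) := by
  let A : Set V := {a | a ∈ L (t + 1) ∧ ∃ x ∈ K t, G.Adj x a}
  have hKL : K t ⊆ L t := hK.subset le_rfl
  have hA : Attachment G (K t) A (lowerLevels L t) :=
    { exists_adj := fun a ha => ha.2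
      anticomplete := fun d hd a ha =>
        (h.isLevelling.ne_and_not_adj t.lt_succ_self ha.1 d hd).imp Ne.symm fun hh hda =>
          hh hda.symm
      exists_path := fun x hx x' hx' _ =>
        h.isLevelling.exists_hasInducedPath t.le_succ (hKL hx) (hKL hx')
      cograph := fun T hT _ => isCograph_induce_mono hT (hK.isCograph h le_rfl) }
  have hY : Attachment G A {y | y ∈ C ∧ ∃ a ∈ A, G.Adj a y} (lowerLevels L (t + 1)) :=
    { exists_adj := fun y hy => hy.2
      anticomplete := fun d hd y hy => hC d hd y hy.1
      exists_path := fun a ha a' ha' _ =>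
        h.isLevelling.exists_hasInducedPath le_rfl ha.1 ha'.1
      cograph := fun T hT hind =>
        h.isCograph_induce_of_parents le_rfl hKL (hK.isCograph h le_rfl) hT hind }
  exact hY.colorable h.not_hasOddHole
    (hA.colorable h.not_hasOddHole (hK.colorable_induce h le_rfl hG) hG hn) hG hn

end SpineClass

end SpineClass

section SpineClasses

variable {G : SimpleGraph V} {L : ℕ → Set V} {A : ℕ → Set V} {C : Set V} {s : ℕ → V} {δ : Prop}
  {i j m n t : ℕ} {u v w x y : V}

/-- The vertices of level `j + 1` adjacent neither to the spine vertex of their own level nor to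
that of the level below. -/
def spineFree (G : SimpleGraph V) (L : ℕ → Set V) (s : ℕ → V) (j : ℕ) : Set V :=
  {u | u ∈ L (j + 1) ∧ ¬ G.Adj (s j) u ∧ ¬ G.Adj (s (j + 1)) u}

theorem IsLevelling.ne_and_not_adj_insert (h : IsLevelling G (t + 1) L) (hj : j ≤ t)
    (hu : u ∈ L (j + 1)) (hx : x ∈ L j) (hy : y ∈ L j) (hxu : ¬ G.Adj x u) (hyu : ¬ G.Adj y u) :
    ∀ p ∈ insert x (insert y (lowerLevels L j)), u ≠ p ∧ ¬ G.Adj u p := by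
  rintro p (rfl | rfl | hp)
  · exact ⟨h.ne_of_mem_succ (by omega) hu hx, fun hh => hxu hh.symm⟩
  · exact ⟨h.ne_of_mem_succ (by omega) hu hy, fun hh => hyu hh.symm⟩
  · exact h.ne_and_not_adj (by omega) hu p hp

namespace SpinedLevelling

theorem ne_spine (h : SpinedLevelling G t L s) (hj : j < t) (hu : ¬ G.Adj (s j) u) :
    u ≠ s (j + 1) := by
  rintro rfl
  exact hu (h.isDependent hj).2.1

theorem not_adj_spine_of_parent (h : SpinedLevelling G t L s) (hj : j < t)
    (hu : ¬ G.Adj (s j) u) (hw : w ∈ L j) (hwu : G.Adj w u) : ¬ G.Adj w (s (j + 1)) := by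
  intro hws
  obtain rfl := (h.isDependent hj).2.2 w hw hws
  exact hu hwu

theorem odd_spine_iff (h : SpinedLevelling G t L s) (hj : j < t) (hu : u ∈ spineFree G L s j)
    (hw : w ∈ L j) (hwu : G.Adj w u) :
    (oddBelow G L (j + 1)).Adj u (s (j + 1)) ↔ (oddBelow G L j).Adj w (s j) :=
  h.odd_iff_odd_parents hj.le hu.1 (h.spine_mem hj) (fun hh => hu.2.2 hh.symm) hw
    (h.spine_mem hj.le) hwu (h.isDependent hj).2.1
    (h.not_adj_spine_of_parent hj hu.2.1 hw hwu) hu.2.1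

theorem exists_hasInducedPath_spine (h : SpinedLevelling G t L s) (hj : j < t)
    (hu : u ∈ spineFree G L s j) (hw : w ∈ L j) (hwu : G.Adj w u) :
    ∃ l, HasInducedPath G (insert w (insert (s j) (lowerLevels L j))) l u (s (j + 1)) ∧
      ((oddBelow G L (j + 1)).Adj u (s (j + 1)) ↔ Odd l) := by
  obtain ⟨l, hl, hodd⟩ := h.exists_hasInducedPath_of_parents hj.le hu.1 (h.spine_mem hj)
    (fun hh => hu.2.2 hh.symm) hw (h.spine_mem hj.le) hwu (h.isDependent hj).2.1
    (h.not_adj_spine_of_parent hj hu.2.1 hw hwu) hu.2.1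
  refine ⟨l + 2, hl, (h.odd_spine_iff hj hu hw hwu).trans (hodd.trans ?_)⟩
  simp [parity_simps]

theorem insert_parent_spine_subset (h : SpinedLevelling G t L s) (hj : j < t) (hw : w ∈ L j) :
    insert w (insert (s j) (lowerLevels L j)) ⊆ lowerLevels L (j + 2) :=
  Set.insert_subset (mem_lowerLevels_of_mem hw (by omega))
    (insert_lowerLevels_subset (h.spine_mem hj.le) (by omega))

theorem adj_of_mem_spineFree (h : SpinedLevelling G t L s) (hj : j < t)
    (hu : u ∈ spineFree G L s j) (hv : v ∈ spineFree G L s j)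
    (hodd : (oddBelow G L (j + 1)).Adj u (s (j + 1)) ↔ (oddBelow G L (j + 1)).Adj v (s (j + 1)))
    (huv : G.Adj u v) (hw : w ∈ L j) (hwu : G.Adj w u) : G.Adj w v := by
  by_contra hwv
  obtain ⟨l, hl, hul⟩ := h.exists_hasInducedPath_spine hj hu hw hwu
  have hvs : v ≠ s (j + 1) := h.ne_spine hj hv.2.1
  have hnvs : ¬ G.Adj v (s (j + 1)) := fun hh => hv.2.2 hh.symm
  have hP : HasInducedPath G (lowerLevels L (j + 2)) (l + 1) v (s (j + 1)) :=
    hl.cons (h.insert_parent_spine_subset hj hw) (mem_lowerLevels_of_mem hu.1 (by omega)) huv.symm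
      hvs hnvs (h.isLevelling.ne_and_not_adj_insert hj.le hv.1 hw (h.spine_mem hj.le) hwv hv.2.1)
  have hvl := h.odd_iff (k := j + 2) (by omega) hv.1 (h.spine_mem hj) hvs hnvs hP
  rw [← hodd, hul, Nat.odd_add_one] at hvl
  exact iff_not_self hvl

end SpinedLevelling

/-- The vertices of level `i` not joined to the spine by an odd path through the levels below. -/
def evenClass (G : SimpleGraph V) (L : ℕ → Set V) (s : ℕ → V) (i : ℕ) : Set V :=
  {u | u ∈ L i ∧ ¬ (oddBelow G L i).Adj u (s i)}

theorem mem_spineFree_of_mem_evenClass (hu : u ∈ evenClass G L s (j + 1))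
    (hsu : ¬ G.Adj (s j) u) : u ∈ spineFree G L s j :=
  ⟨hu.1, hsu, fun hh => hu.2 (oddBelow_adj_of_adj hh.symm)⟩

/-- The vertices joined to the spine by an odd path which arise from those adjacent to the spine
vertex `s (j + 1)` of their level and lying in `A j` by repeatedly passing to children not adjacent
to the spine. -/
def oddClass (G : SimpleGraph V) (L : ℕ → Set V) (s : ℕ → V) (A : ℕ → Set V) : ℕ → Set V
  | 0 => ∅
  | j + 1 => {u | u ∈ L (j + 1) ∧ G.Adj (s (j + 1)) u ∧ u ∈ A j} ∪
      {u | u ∈ spineFree G L s j ∧ (oddBelow G L (j + 1)).Adj u (s (j + 1)) ∧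
        ∃ w ∈ oddClass G L s A j, G.Adj w u}

theorem oddClass_subset : oddClass G L s A i ⊆ L i := by
  obtain _ | j := i
  · exact Set.empty_subset _
  · exact Set.union_subset (fun u hu => hu.1) fun u hu => hu.1.1

theorem odd_of_mem_oddClass (hu : u ∈ oddClass G L s A i) : (oddBelow G L i).Adj u (s i) := by
  obtain _ | j := i
  · exact hu.elim
  · exact hu.elim (fun hu => oddBelow_adj_of_adj hu.2.1.symm) fun hu => hu.2.1

theorem mem_attached_of_mem_oddClass (hu : u ∈ oddClass G L s A (j + 1))
    (hsu : G.Adj (s (j + 1)) u) : u ∈ A j :=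
  hu.elim (fun hu => hu.2.2) fun hu => absurd hsu hu.1.2.2

theorem mem_spineFree_of_mem_oddClass (hu : u ∈ oddClass G L s A (j + 1))
    (hsu : ¬ G.Adj (s (j + 1)) u) :
    u ∈ spineFree G L s j ∧ ∃ w ∈ oddClass G L s A j, G.Adj w u :=
  hu.elim (fun hu => absurd hu.2.1 hsu) fun hu => ⟨hu.1, hu.2.2⟩

namespace SpinedLevelling

theorem exists_parent_mem_evenClass (h : SpinedLevelling G t L s) (hj : j < t)
    (hu : u ∈ evenClass G L s (j + 1)) (hsu : ¬ G.Adj (s j) u) :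
    ∃ w ∈ evenClass G L s j, G.Adj w u := by
  obtain ⟨w, hw, hwu⟩ := h.isLevelling.exists_parent (by omega) hu.1
  have hfree := mem_spineFree_of_mem_evenClass hu hsu
  exact ⟨w, ⟨hw, fun hh => hu.2 ((h.odd_spine_iff hj hfree hw hwu).2 hh)⟩, hwu⟩

theorem not_adj_of_mem_evenClass (h : SpinedLevelling G t L s) (hj : j < t)
    (hu : u ∈ evenClass G L s (j + 1)) (hv : v ∈ evenClass G L s (j + 1)) (hsu : G.Adj (s j) u)
    (hsv : ¬ G.Adj (s j) v) : ¬ G.Adj u v := by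
  intro huv
  have hvs : v ≠ s (j + 1) := h.ne_spine hj hsv
  have hnot {p : V} (hp : p ∈ evenClass G L s (j + 1)) : ¬ G.Adj p (s (j + 1)) := fun hh =>
    hp.2 (oddBelow_adj_of_adj hh)
  have hP : HasInducedPath G (lowerLevels L (j + 2)) 3 v (s (j + 1)) :=
    .three huv.symm hsu.symm (h.isDependent hj).2.1 hvs (hnot hv) (fun hh => hsv hh.symm)
      (hnot hu) (mem_lowerLevels_of_mem hu.1 (by omega))
      (mem_lowerLevels_of_mem (h.spine_mem hj.le) (by omega))
  exact hv.2 ((h.odd_iff (k := j + 2) (by omega) hv.1 (h.spine_mem hj) hvs (hnot hv) hP).2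
    (by decide))

theorem spineClass_evenClass (h : SpinedLevelling G t L s) :
    SpineClass G t L (evenClass G L s) s False where
  subset _ _ hu := hu.1
  apex_mem hj := mem_lowerLevels_of_mem (h.spine_mem hj.le) (by omega)
  exists_parent hj hu hsu := h.exists_parent_mem_evenClass hj hu hsu
  not_adj hj hu hv hsu hsv := h.not_adj_of_mem_evenClass hj hu hv hsu hsv
  odd_iff {j u v} hj hu hv hsu hsv := by
    have hnuv := h.not_adj_of_mem_evenClass hj hu hv hsu hsv
    obtain ⟨w, hw, hwv⟩ := h.exists_parent_mem_evenClass hj hv hsv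
    rw [iff_false]
    by_cases hwu : G.Adj w u
    · exact h.not_odd_of_common_parent hj.le hu.1 hv.1 hnuv hw.1 hwu hwv
    · rw [h.odd_iff_odd_parents hj.le hu.1 hv.1 hnuv (h.spine_mem hj.le) hw.1 hsu hwv hsv hwu]
      exact fun hh => hw.2 hh.symm
  adj_of_adj hj hu hv hsu hsv huv hw hwu :=
    h.adj_of_mem_spineFree hj (mem_spineFree_of_mem_evenClass hu hsu)
      (mem_spineFree_of_mem_evenClass hv hsv) (iff_of_false hu.2 hv.2) huv hw hwu

theorem not_adj_of_mem_oddClass (h : SpinedLevelling G t L s) (hj : j < t)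
    (hu : u ∈ oddClass G L s A (j + 1)) (hv : v ∈ oddClass G L s A (j + 1))
    (hsu : G.Adj (s (j + 1)) u) (hsv : ¬ G.Adj (s (j + 1)) v) : ¬ G.Adj u v := fun huv =>
  h.not_odd_of_common (k := j + 2) (by omega) (oddClass_subset hv) (h.spine_mem hj)
    (fun hh => hsv hh.symm) (mem_lowerLevels_of_mem (oddClass_subset hu) (by omega)) huv hsu.symm
    (odd_of_mem_oddClass hv)

theorem spineClass_oddClass (h : SpinedLevelling G t L s)
    (hodd : ∀ {j u v w}, j < t → u ∈ L (j + 1) → v ∈ spineFree G L s j →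
      w ∈ oddClass G L s A j → G.Adj (s (j + 1)) u → u ∈ A j →
      (oddBelow G L (j + 1)).Adj v (s (j + 1)) → G.Adj w v → ¬ G.Adj u v →
      ((oddBelow G L (j + 1)).Adj u v ↔ δ)) :
    SpineClass G t L (oddClass G L s A) (fun j => s (j + 1)) δ where
  subset _ := oddClass_subset
  apex_mem hj := mem_lowerLevels_of_mem (h.spine_mem hj) (by omega)
  exists_parent _ hu hsu := (mem_spineFree_of_mem_oddClass hu hsu).2
  not_adj hj hu hv hsu hsv := h.not_adj_of_mem_oddClass hj hu hv hsu hsv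
  odd_iff hj hu hv hsu hsv := by
    obtain ⟨hfree, w, hw, hwv⟩ := mem_spineFree_of_mem_oddClass hv hsv
    exact hodd hj (oddClass_subset hu) hfree hw hsu (mem_attached_of_mem_oddClass hu hsu)
      (odd_of_mem_oddClass hv) hwv (h.not_adj_of_mem_oddClass hj hu hv hsu hsv)
  adj_of_adj hj hu hv hsu hsv huv hw hwu :=
    h.adj_of_mem_spineFree hj (mem_spineFree_of_mem_oddClass hu hsu).1
      (mem_spineFree_of_mem_oddClass hv hsv).1
      (iff_of_true (odd_of_mem_oddClass hu) (odd_of_mem_oddClass hv)) huv hw hwu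

end SpinedLevelling

/-- The vertices from which the three odd classes start: those not adjacent to the spine vertex
`s j` of the level below, and those adjacent to it, split according to the parity of `j`. -/
def spineAttachment (G : SimpleGraph V) (s : ℕ → V) : Option Bool → ℕ → Set V
  | none, j => {u | ¬ G.Adj (s j) u}
  | some b, j => {u | G.Adj (s j) u ∧ (Even j ↔ b)}

namespace SpinedLevelling

theorem spineClass_oddClass_none (h : SpinedLevelling G t L s) :
    SpineClass G t L (oddClass G L s (spineAttachment G s none)) (fun j => s (j + 1)) False :=
  h.spineClass_oddClass fun {j u v w} hj hu hv hw hsu hju hodd hwv hnuv => by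
    rw [iff_false]
    have hwL : w ∈ L j := oddClass_subset hw
    by_cases hwu : G.Adj w u
    · exact h.not_odd_of_common_parent hj.le hu hv.1 hnuv hwL hwu hwv
    have hne : u ≠ v := by
      rintro rfl
      exact hwu hwv
    obtain ⟨l, hl, hvl⟩ := h.exists_hasInducedPath_spine hj hv hwL hwv
    have hP : HasInducedPath G (lowerLevels L (j + 2)) (l + 1) u v :=
      hl.symm.cons (h.insert_parent_spine_subset hj hwL)
        (mem_lowerLevels_of_mem (h.spine_mem hj) (by omega)) hsu.symm hne hnuv
        (h.isLevelling.ne_and_not_adj_insert hj.le hu hwL (h.spine_mem hj.le) hwu hju)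
    rw [h.odd_iff (k := j + 2) (by omega) hu hv.1 hne hnuv hP, Nat.odd_add_one, not_not]
    exact hvl.1 hodd

theorem not_adj_spine_of_mem_oddClass_some {b : Bool} (hj : Even j ↔ b)
    (hw : w ∈ oddClass G L s (spineAttachment G s (some b)) j) : ¬ G.Adj (s j) w := by
  obtain _ | j := j
  · exact hw.elim
  · intro hsw
    have hj' : Even j ↔ b := (mem_attached_of_mem_oddClass hw hsw).2
    rw [← hj', Nat.even_add_one] at hj
    exact not_iff_self hj

theorem spineClass_oddClass_some (h : SpinedLevelling G t L s) (b : Bool) :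
    SpineClass G t L (oddClass G L s (spineAttachment G s (some b))) (fun j => s (j + 1)) True :=
  h.spineClass_oddClass fun {j u v w} hj hu hv hw _ hju _ hwv hnuv => by
    rw [iff_true]
    have hodd := odd_of_mem_oddClass hw
    have hwu : ¬ G.Adj w u := fun hwu => not_adj_spine_of_mem_oddClass_some hju.2 hw
      (h.adj_of_common_child hj.le hu hwu hju.1 hodd).symm
    exact (h.odd_iff_odd_parents hj.le hu hv.1 hnuv (h.spine_mem hj.le) (oddClass_subset hw)
      hju.1 hwv hv.2.1 hwu).2 hodd.symm

theorem exists_mem_oddClass (h : SpinedLevelling G t L s) (hi : i ≤ t) (hu : u ∈ L i)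
    (hodd : (oddBelow G L i).Adj u (s i)) :
    ∃ o, u ∈ oddClass G L s (spineAttachment G s o) i := by
  induction i generalizing u with
  | zero => exact absurd (h.isLevelling.subsingleton_zero hu h.spine_zero_mem) hodd.ne
  | succ j ih =>
    by_cases hsu : G.Adj (s (j + 1)) u
    · by_cases hju : G.Adj (s j) u
      · exact ⟨some (decide (Even j)), .inl ⟨hu, hsu, hju, by simp⟩⟩
      · exact ⟨none, .inl ⟨hu, hsu, hju⟩⟩
    have hju : ¬ G.Adj (s j) u := fun hju => h.not_odd_of_common_parent (by omega) hu
      (h.spine_mem hi) (fun hh => hsu hh.symm) (h.spine_mem (by omega)) hju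
      (h.isDependent hi).2.1 hodd
    obtain ⟨w, hw, hwu⟩ := h.isLevelling.exists_parent (by omega) hu
    obtain ⟨o, ho⟩ := ih (by omega) hw ((h.odd_spine_iff hi ⟨hu, hju, hsu⟩ hw hwu).1 hodd)
    exact ⟨o, .inr ⟨⟨hu, hju, hsu⟩, hodd, w, ho, hwu⟩⟩

theorem colorable_of_exists_adj (h : SpinedLevelling G t L s) (hG : G.CliqueFree (m + 3))
    (hn : ∀ S, (G.induce S).CliqueFree (m + 2) → (G.induce S).Colorable n)
    (hC : ∀ d ∈ lowerLevels L (t + 1), ∀ y ∈ C, d ≠ y ∧ ¬ G.Adj d y)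
    (hCL : ∀ y ∈ C, ∃ a ∈ L (t + 1), G.Adj a y) :
    (G.induce C).Colorable (4 * (2 ^ m * (2 ^ (m + 1) * n) * (2 ^ (m + 1) * n))) := by
  let K : Option (Option Bool) → ℕ → Set V
    | none => evenClass G L s
    | some o => oddClass G L s (spineAttachment G s o)
  have hK : ∀ o, ∃ z δ, SpineClass G t L (K o) z δ
    | none => ⟨_, _, h.spineClass_evenClass⟩
    | some none => ⟨_, _, h.spineClass_oddClass_none⟩
    | some (some b) => ⟨_, _, h.spineClass_oddClass_some b⟩
  have hcover : ∀ x ∈ L t, ∃ o, x ∈ K o t := fun x hx => by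
    by_cases hodd : (oddBelow G L t).Adj x (s t)
    · obtain ⟨o, ho⟩ := h.exists_mem_oddClass le_rfl hx hodd
      exact ⟨some o, ho⟩
    · exact ⟨none, hx, hodd⟩
  rw [show 4 = Fintype.card (Option (Option Bool)) from rfl]
  refine colorable_induce_of_subset_iUnion (T := fun o =>
    {y | y ∈ C ∧ ∃ a, (a ∈ L (t + 1) ∧ ∃ x ∈ K o t, G.Adj x a) ∧ G.Adj a y}) (fun y hy => ?_)
    fun o => ?_
  · obtain ⟨a, ha, hay⟩ := hCL y hy
    obtain ⟨x, hx, hxa⟩ := h.isLevelling.exists_parent t.lt_succ_self ha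
    obtain ⟨o, ho⟩ := hcover x hx
    exact Set.mem_iUnion.2 ⟨o, hy, a, ⟨ha, x, ho, hxa⟩, hay⟩
  · obtain ⟨z, δ, hKo⟩ := hK o
    exact hKo.colorable_grandchildren h hG hn hC

end SpinedLevelling

end SpineClasses

section MinimalCover

variable {G : SimpleGraph V} {P T : Set V} {n : ℕ}

/-- `M` is a minimal set covering `T`: every vertex of `T` has a neighbour in `M`, and every vertex
of `M` is the only neighbour in `M` of some vertex of `T`. -/
def IsMinimalCover (G : SimpleGraph V) (M T : Set V) : Prop :=
  (∀ v ∈ T, ∃ u ∈ M, G.Adj u v) ∧ ∀ u ∈ M, ∃ v ∈ T, G.Adj u v ∧ ∀ x ∈ M, G.Adj x v → x = u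

theorem exists_isMinimalCover [Finite V] (h : ∀ v ∈ T, ∃ u ∈ P, G.Adj u v) :
    ∃ M ⊆ P, IsMinimalCover G M T := by
  obtain ⟨M, hM⟩ := (Set.toFinite {M : Set V | M ⊆ P ∧ ∀ v ∈ T, ∃ u ∈ M, G.Adj u v}).exists_minimal
    ⟨P, subset_rfl, h⟩
  obtain ⟨hMP, hMT⟩ := hM.prop
  refine ⟨M, hMP, hMT, fun u hu => ?_⟩
  by_contra! hnot
  have hcover : ∀ v ∈ T, ∃ x ∈ M \ {u}, G.Adj x v := fun v hv => by
    obtain ⟨x, hx, hxv⟩ := hMT v hv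
    by_cases hxu : x = u
    · obtain ⟨y, hy, hyv, hyu⟩ := hnot v hv (hxu ▸ hxv)
      exact ⟨y, ⟨hy, hyu⟩, hyv⟩
    · exact ⟨x, ⟨hx, hxu⟩, hxv⟩
  have hsub : M \ {u} ⊆ M := Set.sdiff_subset
  exact (hM.le_of_le ⟨hsub.trans hMP, hcover⟩ hsub hu).2 rfl

theorem exists_forall_isMinimalCover [Finite V] {P : ℕ → Set V}
    (hP : ∀ i, ∀ v ∈ P (i + 1), ∃ u ∈ P i, G.Adj u v) (hT : T ⊆ P n) :
    ∃ L : ℕ → Set V, L n = T ∧ (∀ i, L i ⊆ P i) ∧ ∀ i < n, IsMinimalCover G (L i) (L (i + 1)) := by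
  induction n generalizing T with
  | zero => exact ⟨fun i => T ∩ P i, Set.inter_eq_left.2 hT, fun i => Set.inter_subset_right,
      by simp⟩
  | succ n ih =>
    obtain ⟨M, hMP, hM⟩ := exists_isMinimalCover fun v hv => hP n v (hT hv)
    obtain ⟨L, hLn, hLP, hL⟩ := ih hMP
    refine ⟨Function.update L (n + 1) T, by simp, fun i => ?_, fun i hi => ?_⟩
    · obtain rfl | hi := eq_or_ne i (n + 1)
      · rwa [Function.update_self]
      · rw [Function.update_of_ne hi]
        exact hLP i
    · rw [Function.update_of_ne hi.ne]
      obtain rfl | hin := eq_or_ne i n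
      · rwa [Function.update_self, hLn]
      · rw [Function.update_of_ne (by omega)]
        exact hL i (by omega)

end MinimalCover

section MinimalLevelling

variable {G : SimpleGraph V} {L : ℕ → Set V} {i k l m t : ℕ} {u v : V}

/-- Sets `L i` of vertices of depth `i`, each a minimal cover of the next one, up to a connected top
level `L (t + 2)`. This is the source of spined levellings. -/
structure MinimalLevelling (G : SimpleGraph V) (t : ℕ) (L : ℕ → Set V) : Prop where
  depth_eq : ∀ {i u}, u ∈ L i → depth G u = i
  isMinimalCover : ∀ {i}, i < t + 2 → IsMinimalCover G (L i) (L (i + 1))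
  connected : (G.induce (L (t + 2))).Connected

theorem exists_minimalLevelling [Finite V] {C : Set V} (hC : (G.induce C).Connected)
    (hdepth : ∀ v ∈ C, depth G v = t + 2) : ∃ L, L (t + 2) = C ∧ MinimalLevelling G t L := by
  obtain ⟨L, rfl, hdepth, hL⟩ := exists_forall_isMinimalCover (G := G)
    (P := fun i => {v | depth G v = i})
    (fun i v hv => (exists_adj_depth_eq hv).imp fun _ hu => hu.symm) hdepth
  exact ⟨L, rfl, fun hu => hdepth _ hu, fun hi => hL _ hi, hC⟩

namespace MinimalLevelling

theorem depth_lt (h : MinimalLevelling G t L) (hu : u ∈ lowerLevels L k) : depth G u < k := by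
  obtain ⟨j, hj, hu⟩ := mem_lowerLevels.1 hu
  rwa [h.depth_eq hu]

theorem ne_and_not_adj (h : MinimalLevelling G t L) (hu : u ∈ lowerLevels L k)
    (hv : v ∈ L (k + 1)) : u ≠ v ∧ ¬ G.Adj u v := by
  have := h.depth_lt hu
  have := h.depth_eq hv
  exact ne_and_not_adj_of_depth_add_two_le (by omega)

theorem exists_isDependent (h : MinimalLevelling G t L) (hi : i < t + 2) (hu : u ∈ L i) :
    ∃ w, IsDependent G L i u w :=
  (h.isMinimalCover hi).2 u hu

-- Following dependents up from `u` into the top level avoids all neighbours of the other vertices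
-- below.
theorem exists_connected_superset (h : MinimalLevelling G t L) (hi : i ≤ t + 2) (hu : u ∈ L i) :
    ∃ B, u ∈ B ∧ L (t + 2) ⊆ B ∧ (G.induce B).Connected ∧
      ∀ p ∈ lowerLevels L (min (i + 1) (t + 1)), p ≠ u → ∀ q ∈ B, q ≠ u → p ≠ q ∧ ¬ G.Adj p q := by
  induction hi using Nat.decreasingInduction generalizing u with
  | self =>
    refine ⟨_, hu, subset_rfl, h.connected, fun p hp _ q hq _ => h.ne_and_not_adj ?_ hq⟩
    exact lowerLevels_mono (min_le_right _ _) hp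
  | of_succ i hi ih =>
    obtain ⟨w, hw, huw, hunique⟩ := h.exists_isDependent hi hu
    obtain ⟨B, hwB, hLB, hB, hpB⟩ := ih hw
    have hconn : (G.induce ({u, w} ∪ B)).Connected :=
      induce_union_connected (induce_pair_connected_of_adj huw).preconnected hB.preconnected
        ⟨w, by simp, hwB⟩
    refine ⟨{u, w} ∪ B, by simp, hLB.trans Set.subset_union_right, hconn, ?_⟩
    intro p hp hpu q hq hqu
    have hpw : p ≠ w := by
      rintro rfl
      have := h.depth_lt hp
      have := h.depth_eq hw
      omega
    obtain rfl | hqw := eq_or_ne q w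
    · refine ⟨hpw, fun hpq => ?_⟩
      obtain ⟨j, hj, hpj⟩ := mem_lowerLevels.1 hp
      have hstep := depth_le_depth_add_one hpq
      rw [h.depth_eq hw, h.depth_eq hpj] at hstep
      obtain rfl : j = i := by omega
      exact hpu (hunique p hpj hpq)
    · have hqB : q ∈ B := by simpa [hqu, hqw] using hq
      exact hpB p (lowerLevels_mono (by omega) hp) hpw q hqB hqw

theorem exists_mem (h : MinimalLevelling G t L) (hi : i ≤ t + 2) : ∃ u, u ∈ L i := by
  induction hi using Nat.decreasingInduction with
  | self => exact ⟨_, h.connected.nonempty.some.2⟩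
  | of_succ i hi ih =>
    obtain ⟨v, hv⟩ := ih
    obtain ⟨u, hu, -⟩ := (h.isMinimalCover hi).1 v hv
    exact ⟨u, hu⟩

theorem exists_connected_union (h : MinimalLevelling G t L) (hi : i ≤ t + 2) (hu : u ∈ L i)
    (hv : v ∈ L i) : ∃ B, u ∈ B ∧ v ∈ B ∧ (G.induce B).Connected ∧
      ∀ p ∈ lowerLevels L (min (i + 1) (t + 1)), p ≠ u → p ≠ v →
        ∀ q ∈ B \ {u, v}, p ≠ q ∧ ¬ G.Adj p q := by
  obtain ⟨B, huB, hLB, hB, hpB⟩ := h.exists_connected_superset hi hu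
  obtain ⟨B', hvB', hLB', hB', hpB'⟩ := h.exists_connected_superset hi hv
  obtain ⟨c, hc⟩ := h.exists_mem le_rfl
  refine ⟨B ∪ B', Or.inl huB, Or.inr hvB',
    induce_union_connected hB.preconnected hB'.preconnected ⟨c, hLB hc, hLB' hc⟩, ?_⟩
  rintro p hp hpu hpv q ⟨hq | hq, hquv⟩
  · exact hpB p hp hpu q hq fun hqu => hquv (Or.inl hqu)
  · exact hpB' p hp hpv q hq fun hqv => hquv (Or.inr hqv)

theorem even_add (h : MinimalLevelling G t L) (hG : ¬ HasOddHole G)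
    (hk : i ≤ k ∧ k ≤ min (i + 1) (t + 1)) (hu : u ∈ L i) (hv : v ∈ L i) (huv : u ≠ v)
    (hnuv : ¬ G.Adj u v) (hl : HasInducedPath G (lowerLevels L k) l u v)
    (hm : HasInducedPath G (lowerLevels L k) m u v) : Even (l + m) := by
  obtain ⟨B, huB, hvB, hB, hpB⟩ := h.exists_connected_union (by omega) hu hv
  obtain ⟨n, hn⟩ := exists_hasInducedPath_of_connected hB huB hvB
  have even_add_n {j : ℕ} (hj : HasInducedPath G (lowerLevels L k) j u v) : Even (j + n) :=
    hj.even_add hn hG huv hnuv fun p hp => hpB p (lowerLevels_mono hk.2 hp)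
  have := even_add_n hl
  have := even_add_n hm
  grind

theorem subsingleton_zero (h : MinimalLevelling G t L) : (L 0).Subsingleton := by
  intro u hu v hv
  obtain ⟨B, huB, hvB, hB, -⟩ := h.exists_connected_union (by omega) hu hv
  have hreach : G.Reachable u v :=
    (hB.preconnected ⟨u, huB⟩ ⟨v, hvB⟩).map (Embedding.induce B).toHom
  exact eq_of_reachable_of_depth_eq_zero hreach (h.depth_eq hu) (h.depth_eq hv)

theorem isLevelling (h : MinimalLevelling G t L) : IsLevelling G (t + 1) L := by
  refine ⟨fun i j _ _ hij => Set.disjoint_left.2 fun u hui huj => hij ?_,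
    Set.exists_eq_singleton_iff_nonempty_subsingleton.2 ⟨h.exists_mem (by omega),
      h.subsingleton_zero⟩, fun i hi hit v hv => ?_⟩
  · rw [← h.depth_eq hui, h.depth_eq huj]
  · obtain ⟨i, rfl⟩ := Nat.exists_eq_add_of_le' hi
    refine ⟨(h.isMinimalCover (by omega)).1 v hv, fun j hj u hu => ?_⟩
    exact (h.ne_and_not_adj (mem_lowerLevels_of_mem hu (by omega)) hv).2

theorem exists_spinedLevelling (h : MinimalLevelling G t L) (hG : ¬ HasOddHole G) :
    ∃ s, SpinedLevelling G t L s := by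
  obtain ⟨r, hr⟩ := h.exists_mem (Nat.zero_le _)
  have hdep (i : ℕ) (u : V) : ∃ w, i < t + 2 → u ∈ L i → IsDependent G L i u w := by
    by_cases hu : i < t + 2 ∧ u ∈ L i
    · exact (h.exists_isDependent hu.1 hu.2).imp fun w hw _ _ => hw
    · exact ⟨u, fun hi hui => absurd ⟨hi, hui⟩ hu⟩
  choose dep hdep using hdep
  let s (i : ℕ) : V := Nat.rec r dep i
  have hs {i : ℕ} (hi : i < t + 2) : s i ∈ L i := by
    induction i with
    | zero => exact hr
    | succ i ih => exact (hdep i (s i) (by omega) (ih (by omega))).1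
  exact ⟨s, hG, h.isLevelling, hr, fun {i} hi => hdep i (s i) (by omega) (hs (by omega)),
    h.even_add hG⟩

end MinimalLevelling

end MinimalLevelling

section CliqueNumber

variable {G : SimpleGraph V} {S : Set V} {k n : ℕ}

/-- The number of colours used for graphs without odd holes and without cliques of size `k + 2`:
at each step, twice the bound of `SpinedLevelling.colorable_of_exists_adj`. -/
def colorBound : ℕ → ℕ
  | 0 => 1
  | k + 1 =>
    2 * (4 * (2 ^ k * (2 ^ (k + 1) * colorBound k) * (2 ^ (k + 1) * colorBound k)))

theorem colorBound_mul_two_pow (k : ℕ) : colorBound k * 2 ^ (3 * k + 8) = 2 ^ 2 ^ (k + 3) := by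
  induction k with
  | zero => norm_num [colorBound]
  | succ k ih =>
    calc colorBound (k + 1) * 2 ^ (3 * (k + 1) + 8)
        = (colorBound k * 2 ^ (3 * k + 8)) ^ 2 := by
          rw [colorBound]
          ring
      _ = 2 ^ 2 ^ (k + 1 + 3) := by rw [ih, ← pow_mul, ← pow_succ]

theorem mul_colorBound_le (k : ℕ) : 48 * (k + 3) * colorBound k ≤ 2 ^ 2 ^ (k + 3) := by
  have hlinear : 48 * (k + 3) ≤ 2 ^ (3 * k + 8) := by
    induction k with
    | zero => norm_num
    | succ k ih => rw [show 3 * (k + 1) + 8 = 3 * k + 8 + 3 by ring, pow_add]; omega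
  rw [← colorBound_mul_two_pow, mul_comm (colorBound k)]
  gcongr

theorem exists_common_neighbor_of_depth_eq_one (hS : (G.induce S).Connected)
    (hdepth : ∀ v ∈ S, depth G v = 1) : ∃ x, ∀ v ∈ S, G.Adj x v := by
  obtain ⟨⟨u, hu⟩⟩ := hS.nonempty
  obtain ⟨x, hxu, hx⟩ := exists_adj_depth_eq (hdepth u hu)
  refine ⟨x, fun v hv => ?_⟩
  obtain ⟨y, hyv, hy⟩ := exists_adj_depth_eq (hdepth v hv)
  have huv : G.Reachable u v := (hS.preconnected ⟨u, hu⟩ ⟨v, hv⟩).map (Embedding.induce S).toHom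
  have hxy : G.Reachable x y := (hxu.reachable.trans huv).trans hyv.symm.reachable
  rwa [eq_of_reachable_of_depth_eq_zero hxy hx hy]

theorem colorable_induce_depth_one (hG : G.CliqueFree (k + 3))
    (hn : ∀ S, (G.induce S).CliqueFree (k + 2) → (G.induce S).Colorable n) :
    (G.induce {v | depth G v = 1}).Colorable n := by
  refine colorable_induce_of_forall_connected fun T hT hconn => hn T ?_
  obtain ⟨x, hx⟩ := exists_common_neighbor_of_depth_eq_one hconn hT
  exact cliqueFree_induce_of_common_neighbor hG fun s hs _ _ => ⟨x, fun v hv => hx v (hs hv)⟩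

theorem colorable_induce_depth_add_two [Finite V] (hodd : ¬ HasOddHole G)
    (hG : G.CliqueFree (k + 3))
    (hn : ∀ S, (G.induce S).CliqueFree (k + 2) → (G.induce S).Colorable n) (t : ℕ) :
    (G.induce {v | depth G v = t + 2}).Colorable
      (4 * (2 ^ k * (2 ^ (k + 1) * n) * (2 ^ (k + 1) * n))) := by
  refine colorable_induce_of_forall_connected fun C hC hconn => ?_
  obtain ⟨L, rfl, hL⟩ := exists_minimalLevelling hconn hC
  obtain ⟨s, hs⟩ := hL.exists_spinedLevelling hodd
  exact hs.colorable_of_exists_adj hG hn (fun d hd y hy => hL.ne_and_not_adj hd hy)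
    (hL.isMinimalCover (by omega)).1

theorem colorable_colorBound [Finite V] (hodd : ¬ HasOddHole G) (hG : G.CliqueFree (k + 2)) :
    G.Colorable (colorBound k) := by
  induction k generalizing V with
  | zero =>
    obtain rfl := cliqueFree_two.1 hG
    exact ⟨Coloring.mk (fun _ => ⟨0, one_pos⟩) fun {u v} huv => huv.elim⟩
  | succ k ih =>
    have hn (S : Set V) (hS : (G.induce S).CliqueFree (k + 2)) :
        (G.induce S).Colorable (colorBound k) := ih (not_hasOddHole_induce hodd S) hS
    have hpos : 0 < colorBound k :=
      Nat.pos_of_mul_pos_right (colorBound_mul_two_pow k ▸ Nat.two_pow_pos _)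
    refine colorable_two_mul_of_depth fun i => ?_
    match i with
    | 0 => exact colorable_induce_depth_zero (by positivity)
    | 1 =>
      refine (colorable_induce_depth_one hG hn).mono ?_
      rw [← mul_assoc, ← mul_assoc]
      exact Nat.le_mul_of_pos_left _ (by positivity)
    | t + 2 => exact colorable_induce_depth_add_two hodd hG hn t

theorem cliqueFree_cliqueNum_add_one [Finite V] (G : SimpleGraph V) :
    G.CliqueFree (G.cliqueNum + 1) := fun _ hs =>
  (Nat.lt_succ_self _).not_ge (hs.card_eq ▸ hs.isClique.card_le_cliqueNum)

end CliqueNumber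

theorem stmt10 [Fintype V] (G : SimpleGraph V) (h : ¬ HasOddHole G) :
    ((48 * (G.cliqueNum + 2) : ℕ) : ℕ∞) * G.chromaticNumber ≤
      ((2 ^ 2 ^ (G.cliqueNum + 2) : ℕ) : ℕ∞) := by
  have hclique := cliqueFree_cliqueNum_add_one G
  generalize G.cliqueNum = ω at hclique ⊢
  obtain _ | k := ω
  · have : IsEmpty V := cliqueFree_one.1 hclique
    simp
  · calc ((48 * (k + 3) : ℕ) : ℕ∞) * G.chromaticNumber
        ≤ ((48 * (k + 3) : ℕ) : ℕ∞) * (colorBound k : ℕ∞) := by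
          gcongr
          exact (colorable_colorBound h hclique).chromaticNumber_le
      _ ≤ ((2 ^ 2 ^ (k + 3) : ℕ) : ℕ∞) := by exact_mod_cast mul_colorBound_le k
end

section
/- For every infinite set F ⊆ {3,4,…} there need not exist a χ-bound: there exists a set F of upper density 1 in the positive integers such that the family of graphs containing no induced cycle with length in F has unbounded chromatic number even restricted to triangle-free graphs. Concretely, given any function g, there is a sequence of triangle-free graphs (G_i) with χ(G_i) ≥ i such that the set of cycle lengths avoided as induced cycles by all G_i has upper density 1. -/
open SimpleGraph

universe u

variable {V : Type u}

/-!
In the random graph `G(n, p)` with `n p` bounded, the expected number of vertices on short cycles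
is bounded, while independent sets of size `t` are unlikely once `p * t.choose 2 > n`. Deleting the
vertices on short cycles gives Erdős's graphs of large girth and chromatic number. Choose such
graphs `G i` successively, the girth of `G i` exceeding the squares of the orders of all earlier
ones. With `n i` the order of `G i`, no cycle of any `G j` has length in `(n i, (n i) ^ 2]`: the
graphs up to `G i` are too small and the later ones have too large girth. These lengths fill a
proportion `1 - 1 / n i` of the integers up to `(n i) ^ 2`.
-/

open Filter MeasureTheory ProbabilityTheory
open scoped Finset unitInterval

section SetBernoulli

variable {ι : Type*} {u : Set ι} {S : Finset ι}

theorem setBernoulli_real_superset (p : I) (hS : ↑S ⊆ u) :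
    setBer(u, p).real {s | ↑S ⊆ s} = (p : ℝ) ^ #S := by
  have h : (fun P : ι → Prop ↦ {i | P i}) ⁻¹' {s | ↑S ⊆ s} =
      (↑S : Set ι).pi fun _ ↦ {True} := by
    ext P
    simp [Set.subset_def]
  rw [measureReal_def, setBernoulli_apply', h, Measure.infinitePi_pi _ (by simp),
    Finset.prod_congr rfl fun i hi ↦ by rw [eq_true (hS hi)]]
  simp

theorem setBernoulli_real_disjoint (p : I) (hS : ↑S ⊆ u) :
    setBer(u, p).real {s | Disjoint ↑S s} = (1 - p : ℝ) ^ #S := by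
  have h : (fun P : ι → Prop ↦ {i | P i}) ⁻¹' {s | Disjoint ↑S s} =
      (↑S : Set ι).pi fun _ ↦ {False} := by
    ext P
    simp [Set.disjoint_left]
  rw [measureReal_def, setBernoulli_apply', h, Measure.infinitePi_pi _ (by simp),
    Finset.prod_congr rfl fun i hi ↦ by rw [eq_true (hS hi)]]
  simp

end SetBernoulli

section FiniteMeasure

variable {Ω ι : Type*} [MeasurableSpace Ω] (μ : Measure Ω) [IsFiniteMeasure μ]

theorem measureReal_le_sum_of_subset_biUnion {A : Set Ω} {s : Finset ι} {E : ι → Set Ω}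
    (h : A ⊆ ⋃ i ∈ s, E i) : μ.real A ≤ ∑ i ∈ s, μ.real (E i) :=
  (measureReal_mono h (measure_ne_top μ _)).trans (measureReal_biUnion_finset_le s E)

theorem mul_measureReal_le_ncard_le_sum [Fintype ι] {E : ι → Set Ω}
    (hE : ∀ i, MeasurableSet (E i)) (r : ℝ) :
    r * μ.real {ω | r ≤ {i | ω ∈ E i}.ncard} ≤ ∑ i, μ.real (E i) := by
  classical
  have hncard (ω : Ω) : ({i | ω ∈ E i}.ncard : ℝ) = ∑ i, (E i).indicator (1 : Ω → ℝ) ω := by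
    simp [Set.indicator_apply, Set.ncard_eq_toFinset_card']
  have hint (i : ι) : Integrable ((E i).indicator (1 : Ω → ℝ)) μ :=
    (integrable_const 1).indicator (hE i)
  simp only [hncard]
  refine (mul_meas_ge_le_integral_of_nonneg (ae_of_all _ fun ω ↦ ?_)
    (integrable_finsetSum _ fun i _ ↦ hint i) r).trans_eq ?_
  · exact Finset.sum_nonneg fun i _ ↦ Set.indicator_nonneg (fun _ _ ↦ zero_le_one) ω
  · rw [integral_finsetSum _ fun i _ ↦ hint i]
    exact Finset.sum_congr rfl fun i _ ↦ integral_indicator_one (hE i)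

end FiniteMeasure

theorem card_finsetWalkLength_succ_le [Fintype V] [DecidableEq V] (G : SimpleGraph V)
    [DecidableRel G.Adj] (l : ℕ) (u v : V) :
    #(G.finsetWalkLength (l + 1) u v) ≤ Fintype.card V ^ l := by
  induction l generalizing u with
  | zero =>
    refine Finset.card_le_one.mpr fun w hw w' hw' ↦ ?_
    rw [mem_finsetWalkLength_iff] at hw hw'
    match w, w' with
    | .cons _ .nil, .cons _ .nil => rfl
  | succ l ih =>
    calc #(G.finsetWalkLength (l + 2) u v)
        ≤ ∑ w : G.neighborSet u, #(G.finsetWalkLength (l + 1) w v) := by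
          rw [finsetWalkLength]
          exact Finset.card_biUnion_le.trans_eq (by simp only [Finset.card_map])
      _ ≤ Fintype.card (G.neighborSet u) * Fintype.card V ^ l :=
          Finset.sum_le_card_nsmul _ _ _ fun w _ ↦ ih w
      _ ≤ Fintype.card V ^ (l + 1) := by
          rw [pow_succ']
          gcongr
          exact Fintype.card_subtype_le _

theorem length_le_card_of_isCycle [Fintype V] {G : SimpleGraph V} {v : V} {c : G.Walk v v}
    (hc : c.IsCycle) : c.length ≤ Fintype.card V := by
  have h := hc.support_nodup.length_le_card
  rwa [List.length_tail, Walk.length_support, Nat.add_sub_cancel] at h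

theorem cliqueFree_three_of_three_lt_egirth {G : SimpleGraph V} (hG : 3 < G.egirth) :
    G.CliqueFree 3 := by
  intro s hs
  obtain ⟨v, c, hc, hl⟩ := is3Clique_iff_exists_cycle_length_three.mp ⟨s, hs⟩
  have h := egirth_le_length hc
  rw [hl] at h
  exact absurd hG h.not_gt

theorem indepSetFree_of_embedding {W : Type*} {G : SimpleGraph V} {H : SimpleGraph W} {t : ℕ}
    (f : G ↪g H) (hH : H.IndepSetFree t) : G.IndepSetFree t :=
  G.cliqueFree_compl.mp ((H.cliqueFree_compl.mpr hH).comap (Embedding.complEquiv f).isContained)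

theorem card_le_mul_of_colorable_of_indepSetFree [Fintype V] {G : SimpleGraph V} {k t : ℕ}
    (hk : G.Colorable k) (ht : G.IndepSetFree (t + 1)) : Fintype.card V ≤ k * t := by
  obtain ⟨c⟩ := hk
  by_contra! hlt
  obtain ⟨i, hi⟩ := Fintype.exists_lt_card_fiber_of_mul_lt_card c (by rwa [Fintype.card_fin])
  obtain ⟨S, hS, hcard⟩ := Finset.exists_subset_card_eq hi
  refine ht S ⟨fun a ha b hb _ hab ↦ c.valid hab ?_, hcard⟩
  exact (Finset.mem_filter.mp (hS ha)).2.trans (Finset.mem_filter.mp (hS hb)).2.symm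

/-- The set of vertices lying on a cycle of `G` of length at most `g`. Deleting it leaves a graph
of girth greater than `g`. -/
def shortCycleVertices (G : SimpleGraph V) (g : ℕ) : Set V :=
  {v | ∃ c : G.Walk v v, c.IsCycle ∧ c.length ≤ g}

theorem lt_egirth_induce_compl_shortCycleVertices (G : SimpleGraph V) (g : ℕ) :
    (g : ℕ∞) < (G.induce (shortCycleVertices G g)ᶜ).egirth := by
  refine ENat.natCast_add_one_le_iff.mp (le_egirth.mpr fun v c hc ↦ ?_)
  by_contra! hlt
  refine v.2 ⟨c.map (Embedding.induce _).toHom, hc.map Subtype.val_injective, ?_⟩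
  exact (Walk.length_map _ c).trans_le (Order.lt_add_one_iff.mp (by exact_mod_cast hlt))

theorem lt_chromaticNumber_induce_compl [Fintype V] {G : SimpleGraph V} {s : Set V} {k t : ℕ}
    (ht : G.IndepSetFree (t + 1)) (hs : s.ncard + k * t < Fintype.card V) :
    (k : ℕ∞) < (G.induce sᶜ).chromaticNumber := by
  classical
  refine not_le.mp (chromaticNumber_le_iff_colorable.not.mpr fun hk ↦ ?_)
  have hcard := card_le_mul_of_colorable_of_indepSetFree hk
    (indepSetFree_of_embedding (Embedding.induce _) ht)
  have hcompl := Set.ncard_add_ncard_compl s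
  rw [Nat.card_eq_fintype_card] at hcompl
  rw [← Nat.card_eq_fintype_card, Nat.card_coe_set_eq] at hcard
  omega

section BinomialRandom

instance [Finite V] : DiscreteMeasurableSpace (SimpleGraph V) where
  forall_measurableSet _ := measurableEmbedding_edgeSet.measurableSet_image.mp .of_discrete

theorem binomialRandom_real_superset [Finite V] {S : Finset (Sym2 V)} (p : I)
    (hS : ↑S ⊆ (Sym2.diagSet : Set (Sym2 V))ᶜ) :
    G(V, p).real {G | ↑S ⊆ G.edgeSet} = (p : ℝ) ^ #S := by
  rw [← setBernoulli_real_superset p hS, binomialRandom_eq_map,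
    map_measureReal_apply measurable_fromEdgeSet .of_discrete]
  congr 1
  ext s
  simp [Set.subset_sdiff, Set.subset_compl_iff_disjoint_right.mp hS]

theorem binomialRandom_real_disjoint [Finite V] {S : Finset (Sym2 V)} (p : I)
    (hS : ↑S ⊆ (Sym2.diagSet : Set (Sym2 V))ᶜ) :
    G(V, p).real {G | Disjoint ↑S G.edgeSet} = (1 - p : ℝ) ^ #S := by
  rw [← setBernoulli_real_disjoint p hS, binomialRandom_eq_map,
    map_measureReal_apply measurable_fromEdgeSet .of_discrete]
  congr 1
  ext s
  simp only [Set.mem_preimage, Set.mem_ofPred_eq, edgeSet_fromEdgeSet]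
  exact ⟨fun h ↦ Set.disjoint_left.mpr fun e he hes ↦ Set.disjoint_left.mp h he ⟨hes, hS he⟩,
    fun h ↦ h.mono_right Set.sdiff_subset⟩

theorem binomialRandom_real_isIndepSet [Finite V] (p : I) (S : Finset V) :
    G(V, p).real {G | G.IsIndepSet S} = (1 - p : ℝ) ^ (#S).choose 2 := by
  classical
  have h : {G : SimpleGraph V | G.IsIndepSet S} =
      {G | Disjoint ↑(S.offDiag.image Sym2.mk.uncurry) G.edgeSet} := by
    ext G
    refine ⟨fun hG ↦ Set.disjoint_left.mpr fun e he hadj ↦ ?_,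
      fun hG a ha b hb hab hadj ↦ Set.disjoint_left.mp hG ?_ (G.mem_edgeSet.mpr hadj)⟩
    · obtain ⟨⟨a, b⟩, hab, rfl⟩ := Finset.mem_image.mp he
      obtain ⟨ha, hb, hne⟩ := Finset.mem_offDiag.mp hab
      exact hG ha hb hne (G.mem_edgeSet.mp hadj)
    · exact Finset.mem_image_of_mem _ (Finset.mem_offDiag.mpr ⟨ha, hb, hab⟩)
  rw [h, binomialRandom_real_disjoint p, Sym2.card_image_offDiag]
  intro e he
  obtain ⟨⟨a, b⟩, hab, rfl⟩ := Finset.mem_image.mp he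
  simpa using (Finset.mem_offDiag.mp hab).2.2

variable [Fintype V] (p : I)

theorem binomialRandom_real_exists_isCycle_le (v : V) (l : ℕ) :
    G(V, p).real {G | ∃ c : G.Walk v v, c.IsCycle ∧ c.length = l + 1} ≤
      Fintype.card V ^ l * (p : ℝ) ^ (l + 1) := by
  classical
  let trails := {w ∈ (⊤ : SimpleGraph V).finsetWalkLength (l + 1) v v | w.IsTrail}
  have hcover : {G : SimpleGraph V | ∃ c : G.Walk v v, c.IsCycle ∧ c.length = l + 1} ⊆
      ⋃ w ∈ trails, {G | ↑w.edges.toFinset ⊆ G.edgeSet} := by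
    rintro G ⟨c, hc, hl⟩
    simp only [Set.mem_iUnion]
    refine ⟨c.mapLe le_top, ?_, ?_⟩
    · simpa [trails, mem_finsetWalkLength_iff, hl] using hc.isTrail
    · intro e he
      exact c.edges_subset_edgeSet (by simpa using he)
  have hprob : ∀ w ∈ trails,
      G(V, p).real {G | ↑w.edges.toFinset ⊆ G.edgeSet} = (p : ℝ) ^ (l + 1) := by
    intro w hw
    obtain ⟨hl, ht⟩ := Finset.mem_filter.mp hw
    rw [binomialRandom_real_superset p, List.toFinset_card_of_nodup ht.edges_nodup,
      Walk.length_edges, mem_finsetWalkLength_iff.mp hl]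
    intro e he
    simpa using w.edges_subset_edgeSet (List.mem_toFinset.mp he)
  calc G(V, p).real {G | ∃ c : G.Walk v v, c.IsCycle ∧ c.length = l + 1}
      ≤ ∑ w ∈ trails, G(V, p).real {G | ↑w.edges.toFinset ⊆ G.edgeSet} :=
        measureReal_le_sum_of_subset_biUnion _ hcover
    _ = #trails * (p : ℝ) ^ (l + 1) := by
        rw [Finset.sum_congr rfl hprob, Finset.sum_const, nsmul_eq_mul]
    _ ≤ Fintype.card V ^ l * (p : ℝ) ^ (l + 1) := by
        have hp : 0 ≤ (p : ℝ) := p.2.1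
        gcongr
        exact_mod_cast (Finset.card_filter_le _ _).trans (card_finsetWalkLength_succ_le _ l v v)

theorem binomialRandom_real_mem_shortCycleVertices_le (g : ℕ) (v : V) :
    G(V, p).real {G | v ∈ shortCycleVertices G g} ≤
      ∑ l ∈ Finset.range g, Fintype.card V ^ l * (p : ℝ) ^ (l + 1) := by
  have hcover : {G : SimpleGraph V | v ∈ shortCycleVertices G g} ⊆
      ⋃ l ∈ Finset.range g, {G | ∃ c : G.Walk v v, c.IsCycle ∧ c.length = l + 1} := by
    rintro G ⟨c, hc, hcg⟩
    have hthree := hc.three_le_length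
    obtain ⟨l, hl⟩ := Nat.exists_eq_add_one_of_ne_zero (show c.length ≠ 0 by omega)
    simp only [Set.mem_iUnion, Finset.mem_range]
    exact ⟨l, by omega, c, hc, hl⟩
  exact (measureReal_le_sum_of_subset_biUnion _ hcover).trans
    (Finset.sum_le_sum fun l _ ↦ binomialRandom_real_exists_isCycle_le p v l)

theorem mul_binomialRandom_real_le_ncard_shortCycleVertices_le (g : ℕ) (r : ℝ) :
    r * G(V, p).real {G | r ≤ (shortCycleVertices G g).ncard} ≤
      ∑ l ∈ Finset.range g, (Fintype.card V * p : ℝ) ^ (l + 1) := by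
  calc r * G(V, p).real {G | r ≤ (shortCycleVertices G g).ncard}
      ≤ ∑ v, G(V, p).real {G | v ∈ shortCycleVertices G g} :=
        mul_measureReal_le_ncard_le_sum _ (E := fun v ↦ {G | v ∈ shortCycleVertices G g})
          (fun _ ↦ .of_discrete) r
    _ ≤ Fintype.card V * ∑ l ∈ Finset.range g, Fintype.card V ^ l * (p : ℝ) ^ (l + 1) :=
        (Finset.sum_le_card_nsmul _ _ _ fun v _ ↦
          binomialRandom_real_mem_shortCycleVertices_le p g v).trans_eq
          (by rw [nsmul_eq_mul, Finset.card_univ])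
    _ = ∑ l ∈ Finset.range g, (Fintype.card V * p : ℝ) ^ (l + 1) := by
        rw [Finset.mul_sum]
        exact Finset.sum_congr rfl fun l _ ↦ by ring

theorem binomialRandom_real_not_indepSetFree_le (t : ℕ) :
    G(V, p).real {G | ¬ G.IndepSetFree t} ≤
      2 ^ Fintype.card V * (1 - p : ℝ) ^ t.choose 2 := by
  have hcover : {G : SimpleGraph V | ¬ G.IndepSetFree t} ⊆
      ⋃ S ∈ Finset.powersetCard t (Finset.univ : Finset V), {G | G.IsIndepSet S} := by
    intro G hG
    simp only [IndepSetFree, Set.mem_ofPred_eq, not_forall, not_not] at hG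
    obtain ⟨S, hS⟩ := hG
    simp only [Set.mem_iUnion, Finset.mem_powersetCard_univ]
    exact ⟨S, hS.card_eq, hS.isIndepSet⟩
  have hprob : ∀ S ∈ Finset.powersetCard t (Finset.univ : Finset V),
      G(V, p).real {G | G.IsIndepSet S} = (1 - p : ℝ) ^ t.choose 2 := fun S hS ↦ by
    rw [binomialRandom_real_isIndepSet, (Finset.mem_powersetCard.mp hS).2]
  calc G(V, p).real {G | ¬ G.IndepSetFree t}
      ≤ ∑ S ∈ Finset.powersetCard t (Finset.univ : Finset V), G(V, p).real {G | G.IsIndepSet S} :=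
        measureReal_le_sum_of_subset_biUnion _ hcover
    _ = (Fintype.card V).choose t * (1 - p : ℝ) ^ t.choose 2 := by
        rw [Finset.sum_congr rfl hprob, Finset.sum_const, Finset.card_powersetCard,
          Finset.card_univ, nsmul_eq_mul]
    _ ≤ 2 ^ Fintype.card V * (1 - p : ℝ) ^ t.choose 2 := by
        have hp : 0 ≤ 1 - (p : ℝ) := sub_nonneg.mpr p.2.2
        gcongr
        exact_mod_cast Nat.choose_le_two_pow _ _

end BinomialRandom

theorem two_pow_mul_one_sub_pow_lt_half {n m : ℕ} {p : ℝ} (hp : p ≤ 1) (h : n + 1 ≤ p * m) :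
    2 ^ n * (1 - p) ^ m < 1 / 2 := by
  have hexp : (1 - p) ^ m ≤ Real.exp (-1) ^ (n + 1) :=
    calc (1 - p) ^ m ≤ Real.exp (-p) ^ m :=
          pow_le_pow_left₀ (sub_nonneg.mpr hp) (Real.one_sub_le_exp_neg p) m
      _ = Real.exp (-(p * m)) := by rw [← Real.exp_nat_mul]; ring_nf
      _ ≤ Real.exp (-(n + 1)) := Real.exp_le_exp.mpr (neg_le_neg h)
      _ = Real.exp (-1) ^ (n + 1) := by rw [← Real.exp_nat_mul]; push_cast; ring_nf
  calc 2 ^ n * (1 - p) ^ m ≤ 2 ^ n * Real.exp (-1) ^ (n + 1) := by gcongr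
    _ < 2 ^ n * (1 / 2) ^ (n + 1) := by
        gcongr
        exact Real.exp_neg_one_lt_half
    _ = 1 / 2 := by rw [pow_succ, ← mul_assoc, ← mul_pow]; norm_num

theorem exists_ncard_shortCycleVertices_lt_and_indepSetFree [Fintype V] {p : I} {g t : ℕ} {r : ℝ}
    (hr : 2 * ∑ l ∈ Finset.range g, (Fintype.card V * p : ℝ) ^ (l + 1) < r)
    (ht : Fintype.card V + 1 ≤ (p : ℝ) * t.choose 2) :
    ∃ G : SimpleGraph V, (shortCycleVertices G g).ncard < r ∧ G.IndepSetFree t := by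
  have hcycle : G(V, p).real {G | r ≤ (shortCycleVertices G g).ncard} < 1 / 2 := by
    have hsum : 0 ≤ ∑ l ∈ Finset.range g, (Fintype.card V * p : ℝ) ^ (l + 1) :=
      Finset.sum_nonneg fun l _ ↦ pow_nonneg (mul_nonneg (Nat.cast_nonneg _) p.2.1) _
    have hmarkov := mul_binomialRandom_real_le_ncard_shortCycleVertices_le (V := V) p g r
    exact lt_of_mul_lt_mul_left (hmarkov.trans_lt (by linarith)) (by linarith)
  have hindep : G(V, p).real {G | ¬ G.IndepSetFree t} < 1 / 2 :=
    (binomialRandom_real_not_indepSetFree_le p t).trans_lt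
      (two_pow_mul_one_sub_pow_lt_half p.2.2 ht)
  by_contra! hbad
  have huniv : {G : SimpleGraph V | r ≤ (shortCycleVertices G g).ncard} ∪
      {G | ¬ G.IndepSetFree t} = Set.univ :=
    Set.eq_univ_of_forall fun G ↦ (le_or_gt r _).imp_right (hbad G)
  have hone := measureReal_union_le (μ := G(V, p))
    {G | r ≤ (shortCycleVertices G g).ncard} {G | ¬ G.IndepSetFree t}
  rw [huniv, probReal_univ] at hone
  linarith

theorem exists_lt_egirth_and_lt_chromaticNumber (g k : ℕ) :
    ∃ (n : ℕ) (G : SimpleGraph (Fin n)), (g : ℕ∞) < G.egirth ∧ (k : ℕ∞) < G.chromaticNumber := by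
  classical
  -- For `n = 2 (k + 1) t` and `p = 4 (k + 1) / t` the bound on the expected number of vertices on
  -- short cycles depends only on `n p = 8 (k + 1) ^ 2`, so it is beaten by `n / 2` for large `t`.
  let C := ∑ l ∈ Finset.range g, (8 * (k + 1) ^ 2) ^ (l + 1)
  obtain ⟨t, ht⟩ : ∃ t, t = 4 * (k + 1) + 2 * C := ⟨_, rfl⟩
  have ht₀ : (0 : ℝ) < t := by exact_mod_cast (show 0 < t by omega)
  let p : I := ⟨4 * (k + 1) / t, by positivity,
    div_le_one_of_le₀ (by exact_mod_cast (show 4 * (k + 1) ≤ t by omega)) ht₀.le⟩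
  obtain ⟨G, hshort, hindep⟩ : ∃ G : SimpleGraph (Fin (2 * ((k + 1) * t))),
      (shortCycleVertices G g).ncard < ((k + 1) * t : ℝ) ∧ G.IndepSetFree (t + 1) := by
    refine exists_ncard_shortCycleVertices_lt_and_indepSetFree (p := p) ?_ ?_
    · have hmean : 2 * ((k + 1) * t) * (p : ℝ) = 8 * (k + 1) ^ 2 := by
        simp only [p]
        field_simp
        ring
      have hC : 2 * C < (k + 1) * t := by nlinarith
      rw [Fintype.card_fin]
      push_cast
      rw [hmean]
      exact_mod_cast hC
    · have hpt : (p : ℝ) * (t + 1).choose 2 = 2 * (k + 1) * (t + 1) := by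
        rw [Nat.cast_choose_two]
        simp only [p]
        push_cast
        field_simp
        ring
      rw [Fintype.card_fin, hpt]
      push_cast
      nlinarith
  let H := G.induce (shortCycleVertices G g)ᶜ
  have hH : (k : ℕ∞) < H.chromaticNumber := by
    refine lt_chromaticNumber_induce_compl hindep ?_
    rw [Fintype.card_fin]
    have : (shortCycleVertices G g).ncard < (k + 1) * t := by exact_mod_cast hshort
    linarith
  exact ⟨_, H.overFin rfl, (H.overFinIso rfl).egirth_eq ▸
    lt_egirth_induce_compl_shortCycleVertices G g, chromaticNumber_congr (H.overFinIso rfl) ▸ hH⟩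

theorem exists_seq_lt_egirth_and_le_chromaticNumber :
    ∃ (n : ℕ → ℕ) (G : ∀ i, SimpleGraph (Fin (n i))), StrictMono n ∧
      (∀ i, 3 < (G i).egirth) ∧ (∀ i : ℕ, (i : ℕ∞) ≤ (G i).chromaticNumber) ∧
      ∀ i j : ℕ, i < j → (n i ^ 2 : ℕ) < (G j).egirth := by
  obtain ⟨f, hgirth, hf⟩ := exists_seq_of_forall_finset_exists
    (fun x : Σ n, SimpleGraph (Fin n) ↦ 3 < x.2.egirth)
    (fun x y ↦ (x.1 : ℕ∞) < y.2.chromaticNumber ∧ (x.1 ^ 2 : ℕ) < y.2.egirth) fun s _ ↦ by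
      let b := s.sup fun x ↦ x.1 ^ 2
      obtain ⟨n, G, hg, hχ⟩ := exists_lt_egirth_and_lt_chromaticNumber (b + 3) b
      refine ⟨⟨n, G⟩, lt_of_le_of_lt (by norm_cast; omega) hg, fun x hx ↦ ?_⟩
      have hb : x.1 ^ 2 ≤ b := Finset.le_sup (f := fun x ↦ x.1 ^ 2) hx
      exact ⟨lt_of_le_of_lt (by exact_mod_cast (Nat.le_self_pow two_ne_zero _).trans hb) hχ,
        lt_of_le_of_lt (by norm_cast; omega) hg⟩
  have hmono : StrictMono fun i ↦ (f i).1 := fun i j hij ↦ by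
    simpa using (hf i j hij).1.trans_le chromaticNumber_le_card
  refine ⟨fun i ↦ (f i).1, fun i ↦ (f i).2, hmono, hgirth, fun i ↦ ?_, fun i j hij ↦ (hf i j hij).2⟩
  cases i with
  | zero => exact zero_le
  | succ i =>
    exact ENat.natCast_add_one_le_iff.mpr <|
      lt_of_le_of_lt (by exact_mod_cast hmono.le_apply) (hf i (i + 1) i.lt_succ_self).1

theorem length_notMem_Ioc_of_isCycle {ι : Type*} [LinearOrder ι] {W : ι → Type*}
    [∀ i, Fintype (W i)] {n b : ι → ℕ} {G : ∀ i, SimpleGraph (W i)}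
    (hW : ∀ i, Fintype.card (W i) ≤ n i) (hn : Monotone n)
    (hG : ∀ i j, i < j → (b i : ℕ) < (G j).egirth) (i : ι) {j : ι} {v : W j} {c : (G j).Walk v v}
    (hc : c.IsCycle) : c.length ∉ Set.Ioc (n i) (b i) := by
  rintro ⟨hlow, hhigh⟩
  rcases le_or_gt j i with hji | hij
  · exact hlow.not_ge ((length_le_card_of_isCycle hc).trans ((hW j).trans (hn hji)))
  · have hlt : b i < c.length := by exact_mod_cast (hG i j hij).trans_le (egirth_le_length hc)
    exact hlt.not_ge hhigh

theorem frequently_le_ncard_inter_Iic_of_frequently_Ioc_sq_subset {A : Set ℕ}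
    (hA : ∃ᶠ n : ℕ in atTop, Set.Ioc n (n ^ 2) ⊆ A) {ε : ℝ} (hε : 0 < ε) :
    ∃ᶠ N : ℕ in atTop, (1 - ε) * N ≤ (A ∩ Set.Iic N).ncard := by
  have hlarge : ∀ᶠ n : ℕ in atTop, 1 / ε ≤ n := tendsto_natCast_atTop_atTop.eventually_ge_atTop _
  refine (tendsto_pow_atTop two_ne_zero).frequently
    ((hA.and_eventually hlarge).mono fun n ⟨hn, hnε⟩ ↦ ?_)
  have hcard : n ^ 2 - n ≤ (A ∩ Set.Iic (n ^ 2)).ncard := by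
    rw [← Nat.card_Ioc, ← Set.ncard_coe_finset, Finset.coe_Ioc]
    exact Set.ncard_le_ncard (Set.subset_inter hn fun m hm ↦ hm.2)
      ((Set.finite_Iic _).inter_of_right A)
  have hnat : n ^ 2 ≤ (A ∩ Set.Iic (n ^ 2)).ncard + n := Nat.sub_le_iff_le_add.mp hcard
  have hreal : (n : ℝ) ^ 2 ≤ (A ∩ Set.Iic (n ^ 2)).ncard + n := by exact_mod_cast hnat
  have hεn : (n : ℝ) ≤ ε * n ^ 2 := by
    nlinarith [mul_le_mul_of_nonneg_right ((div_le_iff₀' hε).mp hnε) n.cast_nonneg]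
  push_cast
  linarith

theorem stmt15 :
    ∃ (W : ℕ → Type) (_ : ∀ i, Fintype (W i)) (G : ∀ i, SimpleGraph (W i)),
      (∀ i, (G i).CliqueFree 3) ∧
      (∀ i, ((i : ℕ) : ℕ∞) ≤ (G i).chromaticNumber) ∧
      (∀ ε : ℝ, 0 < ε → ∀ N0 : ℕ, ∃ N : ℕ, N0 ≤ N ∧
        (1 - ε) * (N : ℝ) ≤
          (({n : ℕ | 3 ≤ n ∧ n ≤ N ∧ ∀ i, ¬ ∃ (v : W i) (p : (G i).Walk v v),
              p.IsCycle ∧ IsInducedWalk (G i) p ∧ p.length = n}).ncard : ℝ)) := by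
  obtain ⟨n, G, hmono, hgirth, hχ, hsq⟩ := exists_seq_lt_egirth_and_le_chromaticNumber
  refine ⟨fun i ↦ Fin (n i), inferInstance, G,
    fun i ↦ cliqueFree_three_of_three_lt_egirth (hgirth i), hχ, fun ε hε N₀ ↦ ?_⟩
  let A : Set ℕ := {l | 3 ≤ l ∧ ∀ j, ¬ ∃ (v : Fin (n j)) (c : (G j).Walk v v),
    c.IsCycle ∧ IsInducedWalk (G j) c ∧ c.length = l}
  have hA : ∃ᶠ m in atTop, Set.Ioc m (m ^ 2) ⊆ A := by
    refine hmono.tendsto_atTop.frequently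
      ((eventually_ge_atTop 2).mono fun i hi l hl ↦ ?_).frequently
    refine ⟨(hi.trans hmono.le_apply).trans_lt hl.1, ?_⟩
    rintro j ⟨v, c, hc, -, rfl⟩
    exact length_notMem_Ioc_of_isCycle (fun i ↦ (Fintype.card_fin _).le)
      hmono.monotone hsq i hc hl
  obtain ⟨N, hN, hdensity⟩ := frequently_atTop.mp
    (frequently_le_ncard_inter_Iic_of_frequently_Ioc_sq_subset hA hε) N₀
  refine ⟨N, hN, hdensity.trans_eq (congrArg (fun s : Set ℕ ↦ (s.ncard : ℝ)) ?_)⟩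
  ext l
  exact and_assoc.trans (and_congr_right fun _ ↦ and_comm)
end
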